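/- arXiv:1311.5392 — 4 statements merged into one kernel-verified Lean document; each statement's English description precedes it below -/
import Mathlib

section
/- The map Φ(A,B) = ( 𝓘₀²(A,B), 𝓘₁²(A,B)/𝓘₀²(A,B) ), defined for A ∈ ℝ and B ≥ 0, is a bijection from ℝ × [0,∞) onto (0,∞) × [0,1); moreover Φ is continuously differentiable (one-sidedly at B = 0), and its restriction to the open half-plane ℝ × (0,∞) is a C¹ diffeomorphism onto (0,∞) × (0,1). -/
open MeasureTheory Set

/-- The Fermi integral of order `s`: `φ_s(x) = (1/Γ(s)) ∫₀^∞ t^{s-1}/(e^{t-x}+1) dt`. -/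
noncomputable def fermi (s x : ℝ) : ℝ :=
  (1 / Real.Gamma s) * ∫ t in Set.Ioi (0 : ℝ), t ^ (s - 1) / (Real.exp (t - x) + 1)

/-- `𝓘_N^s(A,B) = (1/π) ∫₀^π cos(Nθ) φ_s(A + B cos θ) dθ`. -/
noncomputable def calI (N : ℕ) (s A B : ℝ) : ℝ :=
  (1 / Real.pi) * ∫ θ in (0 : ℝ)..Real.pi, Real.cos (N * θ) * fermi s (A + B * Real.cos θ)

/-- The map `Φ(A,B) = (𝓘₀²(A,B), 𝓘₁²(A,B)/𝓘₀²(A,B))`. -/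
noncomputable def Phi (x : ℝ × ℝ) : ℝ × ℝ :=
  (calI 0 2 x.1 x.2, calI 1 2 x.1 x.2 / calI 0 2 x.1 x.2)

/-!
The pair `Ψ(A, B)` of the first two cosine moments `∫₀^π F(A + B cos θ) dθ` and
`∫₀^π cos θ · F(A + B cos θ) dθ` is the gradient of `G(A, B) = ∫₀^π f(A + B cos θ) dθ`, where
`f' = F`. If `F` is increasing then `G` is strictly convex, so `Ψ` is strictly monotone, hence
injective, with positive definite Jacobian. If moreover `F` runs from `0` to `∞`, then
`G(A, B) - (xA + yB)` is coercive for the points `(x, y)` of the cone `|y| < x`, and its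
minimiser is a preimage of `(x, y)` under `Ψ`. For `F` the Fermi integral, `Φ` is `Ψ` in the
coordinates `(x / π, y / x)`, and its second component has the sign of `B`.
-/

open Filter Topology

section WeylIntegral

/-- The Weyl fractional integral of order `s`,
`x ↦ (1/Γ(s)) ∫₀^∞ t^(s-1) g(x - t) dt`, for functions `g` dominated by `exp`. The Fermi integral is
the Weyl integral of the sigmoid function, and Weyl integration commutes with differentiation. -/
noncomputable def weylIntegral (s : ℝ) (g : ℝ → ℝ) (x : ℝ) : ℝ :=
  (1 / Real.Gamma s) * ∫ t in Ioi (0 : ℝ), t ^ (s - 1) * g (x - t)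

variable {s : ℝ} {g g' : ℝ → ℝ}

lemma aestronglyMeasurable_weylIntegrand (hg : Continuous g) (x : ℝ) :
    AEStronglyMeasurable (fun t : ℝ => t ^ (s - 1) * g (x - t)) (volume.restrict (Ioi 0)) :=
  ((measurable_id.pow_const (s - 1)).mul
    (hg.measurable.comp (measurable_const.sub measurable_id))).aestronglyMeasurable

lemma norm_weylIntegrand_le (hg_le : ∀ u, |g u| ≤ Real.exp u) {t x b : ℝ} (ht : 0 < t)
    (hx : x ≤ b) : ‖t ^ (s - 1) * g (x - t)‖ ≤ Real.exp b * (Real.exp (-t) * t ^ (s - 1)) := by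
  have hpow : 0 < t ^ (s - 1) := Real.rpow_pos_of_pos ht _
  calc ‖t ^ (s - 1) * g (x - t)‖ = t ^ (s - 1) * |g (x - t)| := by
        rw [Real.norm_eq_abs, abs_mul, abs_of_pos hpow]
    _ ≤ t ^ (s - 1) * Real.exp (b + -t) := by
        gcongr
        exact (hg_le _).trans (Real.exp_le_exp.2 (by linarith))
    _ = Real.exp b * (Real.exp (-t) * t ^ (s - 1)) := by rw [Real.exp_add]; ring

lemma integrableOn_weylIntegrand (hs : 0 < s) (hg : Continuous g)
    (hg_le : ∀ u, |g u| ≤ Real.exp u) (x : ℝ) :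
    IntegrableOn (fun t : ℝ => t ^ (s - 1) * g (x - t)) (Ioi 0) := by
  refine Integrable.mono' ((Real.GammaIntegral_convergent hs).const_mul (Real.exp x))
    (aestronglyMeasurable_weylIntegrand hg x) ?_
  filter_upwards [ae_restrict_mem measurableSet_Ioi] with t ht
  exact norm_weylIntegrand_le hg_le ht le_rfl

lemma weylIntegral_le_exp (hs : 0 < s) (hg : Continuous g) (hg_le : ∀ u, |g u| ≤ Real.exp u)
    (x : ℝ) : weylIntegral s g x ≤ Real.exp x := by
  have := Real.Gamma_pos_of_pos hs
  have hle : ∫ t in Ioi (0 : ℝ), t ^ (s - 1) * g (x - t) ≤ Real.exp x * Real.Gamma s := by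
    rw [Real.Gamma_eq_integral hs, ← integral_const_mul]
    exact setIntegral_mono_on (integrableOn_weylIntegrand hs hg hg_le x)
      ((Real.GammaIntegral_convergent hs).const_mul _) measurableSet_Ioi
      fun t ht => (le_abs_self _).trans (norm_weylIntegrand_le hg_le ht le_rfl)
  calc weylIntegral s g x ≤ 1 / Real.Gamma s * (Real.exp x * Real.Gamma s) := by
        unfold weylIntegral
        gcongr
    _ = Real.exp x := by field_simp

lemma weylIntegral_nonneg (hs : 0 < s) (hg_nonneg : ∀ u, 0 ≤ g u) (x : ℝ) :
    0 ≤ weylIntegral s g x := by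
  have := Real.Gamma_pos_of_pos hs
  refine mul_nonneg (by positivity) (setIntegral_nonneg measurableSet_Ioi fun t ht => ?_)
  exact mul_nonneg (Real.rpow_nonneg (mem_Ioi.1 ht).le _) (hg_nonneg _)

lemma weylIntegral_pos (hs : 0 < s) (hg : Continuous g) (hg_le : ∀ u, |g u| ≤ Real.exp u)
    (hg_pos : ∀ u, 0 < g u) (x : ℝ) : 0 < weylIntegral s g x := by
  have := Real.Gamma_pos_of_pos hs
  have hpos : ∀ t ∈ Ioi (0 : ℝ), 0 < t ^ (s - 1) * g (x - t) := fun t ht =>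
    mul_pos (Real.rpow_pos_of_pos ht _) (hg_pos _)
  refine mul_pos (by positivity) ?_
  rw [setIntegral_pos_iff_support_of_nonneg_ae
    ((ae_restrict_mem measurableSet_Ioi).mono fun t ht => (hpos t ht).le)
    (integrableOn_weylIntegrand hs hg hg_le x),
    inter_eq_right.2 fun t ht => Function.mem_support.2 (hpos t ht).ne']
  simp

lemma continuous_weylIntegral (hs : 0 < s) (hg : Continuous g)
    (hg_le : ∀ u, |g u| ≤ Real.exp u) : Continuous (weylIntegral s g) := by
  refine continuous_const.mul (continuous_iff_continuousAt.2 fun x => ?_)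
  refine continuousAt_of_dominated (F := fun y t => t ^ (s - 1) * g (y - t))
    (Eventually.of_forall fun y => aestronglyMeasurable_weylIntegrand hg y) ?_
    ((Real.GammaIntegral_convergent hs).const_mul (Real.exp (x + 1)))
    (Eventually.of_forall fun t => by fun_prop)
  filter_upwards [Iic_mem_nhds (lt_add_one x)] with y hy
  filter_upwards [ae_restrict_mem measurableSet_Ioi] with t ht
  exact norm_weylIntegrand_le hg_le ht hy

lemma hasDerivAt_weylIntegral (hs : 0 < s) (hg : ∀ u, HasDerivAt g (g' u) u)
    (hg' : Continuous g') (hg_le : ∀ u, |g u| ≤ Real.exp u) (hg'_le : ∀ u, |g' u| ≤ Real.exp u)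
    (x : ℝ) : HasDerivAt (weylIntegral s g) (weylIntegral s g' x) x := by
  have hgc : Continuous g := continuous_iff_continuousAt.2 fun u => (hg u).continuousAt
  refine HasDerivAt.const_mul _ (hasDerivAt_integral_of_dominated_loc_of_deriv_le
    (F := fun y t => t ^ (s - 1) * g (y - t)) (F' := fun y t => t ^ (s - 1) * g' (y - t))
    (Iic_mem_nhds (lt_add_one x))
    (Eventually.of_forall fun y => aestronglyMeasurable_weylIntegrand hgc y)
    (integrableOn_weylIntegrand hs hgc hg_le x) (aestronglyMeasurable_weylIntegrand hg' x) ?_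
    ((Real.GammaIntegral_convergent hs).const_mul (Real.exp (x + 1)))
    (Eventually.of_forall fun t y _ => ((hg (y - t)).comp_sub_const y t).const_mul _)).2
  filter_upwards [ae_restrict_mem measurableSet_Ioi] with t ht y hy
  exact norm_weylIntegrand_le hg'_le ht hy

lemma mul_rpow_le_weylIntegral (hs : 0 < s) (hg : Continuous g) (hg_le : ∀ u, |g u| ≤ Real.exp u)
    (hg_nonneg : ∀ u, 0 ≤ g u) {c : ℝ} (hc : ∀ u, 0 ≤ u → c ≤ g u) {x : ℝ} (hx : 0 ≤ x) :
    1 / Real.Gamma s * (x ^ s / s * c) ≤ weylIntegral s g x := by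
  have := Real.Gamma_pos_of_pos hs
  have hint := integrableOn_weylIntegrand hs hg hg_le x
  have hpow : IntervalIntegrable (fun t : ℝ => t ^ (s - 1)) volume 0 x :=
    intervalIntegral.intervalIntegrable_rpow' (by linarith)
  unfold weylIntegral
  gcongr
  calc x ^ s / s * c = ∫ t in Ioc 0 x, t ^ (s - 1) * c := by
        rw [← intervalIntegral.integral_of_le hx, intervalIntegral.integral_mul_const,
          integral_rpow (Or.inl (by linarith)), sub_add_cancel, Real.zero_rpow hs.ne', sub_zero]
    _ ≤ ∫ t in Ioc 0 x, t ^ (s - 1) * g (x - t) := by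
        refine setIntegral_mono_on ((intervalIntegrable_iff_integrableOn_Ioc_of_le hx).1
          (hpow.mul_const c)) (hint.mono_set Ioc_subset_Ioi_self) measurableSet_Ioc fun t ht => ?_
        exact mul_le_mul_of_nonneg_left (hc _ (sub_nonneg.2 ht.2)) (Real.rpow_nonneg ht.1.le _)
    _ ≤ ∫ t in Ioi 0, t ^ (s - 1) * g (x - t) := by
        refine setIntegral_mono_set hint ?_ Ioc_subset_Ioi_self.eventuallyLE
        filter_upwards [ae_restrict_mem measurableSet_Ioi] with t ht
        exact mul_nonneg (Real.rpow_nonneg (mem_Ioi.1 ht).le _) (hg_nonneg _)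

end WeylIntegral

section Fermi

variable {s : ℝ}

lemma fermi_eq_weylIntegral_sigmoid (s : ℝ) : fermi s = weylIntegral s Real.sigmoid := by
  ext x
  simp only [fermi, weylIntegral, Real.sigmoid_def, neg_sub, div_eq_mul_inv, add_comm]

lemma abs_sigmoid_le_exp (u : ℝ) : |Real.sigmoid u| ≤ Real.exp u := by
  rw [abs_of_pos (Real.sigmoid_pos u), Real.sigmoid_def, ← neg_neg u, Real.exp_neg (-u), neg_neg]
  gcongr
  linarith

lemma deriv_sigmoid_pos (u : ℝ) : 0 < deriv Real.sigmoid u := by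
  rw [Real.deriv_sigmoid]
  exact mul_pos (Real.sigmoid_pos u) (sub_pos.2 (Real.sigmoid_lt_one u))

lemma abs_deriv_sigmoid_le_exp (u : ℝ) : |deriv Real.sigmoid u| ≤ Real.exp u := by
  have hσ := Real.sigmoid_pos u
  rw [abs_of_pos (deriv_sigmoid_pos u), Real.deriv_sigmoid]
  exact (mul_le_of_le_one_right hσ.le (by linarith)).trans
    ((le_abs_self _).trans (abs_sigmoid_le_exp u))

lemma continuous_deriv_sigmoid : Continuous (deriv Real.sigmoid) :=
  contDiff_sigmoid.continuous_deriv le_top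

lemma hasDerivAt_fermi (hs : 0 < s) (x : ℝ) :
    HasDerivAt (fermi s) (weylIntegral s (deriv Real.sigmoid) x) x := by
  rw [fermi_eq_weylIntegral_sigmoid]
  exact hasDerivAt_weylIntegral hs (fun u => (differentiable_sigmoid u).hasDerivAt)
    continuous_deriv_sigmoid abs_sigmoid_le_exp abs_deriv_sigmoid_le_exp x

lemma contDiff_fermi (hs : 0 < s) : ContDiff ℝ 1 (fermi s) := by
  refine contDiff_one_iff_deriv.2 ⟨fun x => (hasDerivAt_fermi hs x).differentiableAt, ?_⟩
  rw [funext fun x => (hasDerivAt_fermi hs x).deriv]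
  exact continuous_weylIntegral hs continuous_deriv_sigmoid abs_deriv_sigmoid_le_exp

lemma deriv_fermi_pos (hs : 0 < s) (x : ℝ) : 0 < deriv (fermi s) x := by
  rw [(hasDerivAt_fermi hs x).deriv]
  exact weylIntegral_pos hs continuous_deriv_sigmoid abs_deriv_sigmoid_le_exp deriv_sigmoid_pos x

lemma tendsto_fermi_atBot (hs : 0 < s) : Tendsto (fermi s) atBot (𝓝 0) := by
  rw [fermi_eq_weylIntegral_sigmoid]
  exact squeeze_zero (weylIntegral_nonneg hs Real.sigmoid_nonneg)
    (weylIntegral_le_exp hs differentiable_sigmoid.continuous abs_sigmoid_le_exp)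
    Real.tendsto_exp_atBot

lemma tendsto_fermi_atTop (hs : 0 < s) : Tendsto (fermi s) atTop atTop := by
  have := Real.Gamma_pos_of_pos hs
  rw [fermi_eq_weylIntegral_sigmoid]
  refine tendsto_atTop_mono' atTop (f₁ := fun x => 1 / Real.Gamma s * (x ^ s / s * 2⁻¹)) ?_
    ((((tendsto_rpow_atTop hs).atTop_div_const hs).atTop_mul_const (by norm_num)).const_mul_atTop
      (by positivity))
  filter_upwards [eventually_ge_atTop 0] with x hx
  exact mul_rpow_le_weylIntegral hs differentiable_sigmoid.continuous abs_sigmoid_le_exp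
    Real.sigmoid_nonneg (fun u hu => Real.sigmoid_zero ▸ Real.sigmoid_monotone hu) hx

end Fermi

section Calculus

lemma hasFDerivAt_intervalIntegral_of_continuous {H E : Type*} [NormedAddCommGroup H]
    [NormedSpace ℝ H] [ProperSpace H] [NormedAddCommGroup E] [NormedSpace ℝ E]
    {f : H → ℝ → E} {f' : H → ℝ → H →L[ℝ] E} (hf : ∀ p, Continuous (f p))
    (hf' : Continuous (Function.uncurry f')) (hderiv : ∀ p t, HasFDerivAt (f · t) (f' p t) p)
    (a b : ℝ) (p : H) :
    HasFDerivAt (fun q => ∫ t in a..b, f q t) (∫ t in a..b, f' p t) p := by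
  obtain ⟨C, hC⟩ := ((isCompact_closedBall p 1).prod
    (isCompact_uIcc (a := a) (b := b))).exists_bound_of_continuousOn hf'.continuousOn
  exact intervalIntegral.hasFDerivAt_integral_of_dominated_of_fderiv_le (bound := fun _ => C)
    (Metric.closedBall_mem_nhds p one_pos)
    (Eventually.of_forall fun q => (hf q).aestronglyMeasurable) ((hf p).intervalIntegrable _ _)
    (by fun_prop : Continuous (f' p)).aestronglyMeasurable
    (Eventually.of_forall fun t ht q hq => hC (q, t) ⟨hq, uIoc_subset_uIcc ht⟩)
    intervalIntegrable_const (Eventually.of_forall fun t _ q _ => hderiv q t)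

lemma contDiffAt_invFun_of_injective_fderiv {𝕜 E : Type*} [RCLike 𝕜] [NormedAddCommGroup E]
    [NormedSpace 𝕜 E] [FiniteDimensional 𝕜 E] {n : WithTop ℕ∞} (hn : n ≠ 0) {f : E → E}
    (hinj : Function.Injective f) {p : E} (hf : ContDiffAt 𝕜 n f p)
    (hderiv : Function.Injective (fderiv 𝕜 f p)) :
    ContDiffAt 𝕜 n (Function.invFun f) (f p) := by
  have : CompleteSpace E := FiniteDimensional.complete 𝕜 E
  let e : E ≃L[𝕜] E :=
    (LinearEquiv.ofInjectiveEndo (fderiv 𝕜 f p : E →ₗ[𝕜] E) hderiv).toContinuousLinearEquiv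
  have he : HasFDerivAt f (e : E →L[𝕜] E) p := (hf.differentiableAt hn).hasFDerivAt
  refine (hf.to_localInverse he hn).congr_of_eventuallyEq ?_
  filter_upwards [(hf.hasStrictFDerivAt' he hn).eventually_right_inverse] with y hy
  exact hinj ((Function.invFun_eq ⟨_, hy⟩).trans hy.symm)

lemma mul_sub_le_intervalIntegral_of_monotone {F : ℝ → ℝ} (hF : Monotone F) (a v : ℝ) :
    F a * (v - a) ≤ ∫ t in a..v, F t := by
  rcases le_total a v with hav | hva
  · have hle := intervalIntegral.integral_mono_on hav intervalIntegrable_const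
      (hF.intervalIntegrable (μ := volume)) fun t ht => hF ht.1
    rwa [intervalIntegral.integral_const, smul_eq_mul, mul_comm] at hle
  · have hle := intervalIntegral.integral_mono_on hva (hF.intervalIntegrable (μ := volume))
      intervalIntegrable_const fun t ht => hF ht.2
    rw [intervalIntegral.integral_const, smul_eq_mul] at hle
    rw [intervalIntegral.integral_symm]
    linarith

lemma exists_mul_sub_le_intervalIntegral {F : ℝ → ℝ} (hF : Continuous F) (hmono : Monotone F)
    (hbot : Tendsto F atBot (𝓝 0)) (htop : Tendsto F atTop atTop) {K : ℝ} (hK : 0 < K) :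
    ∃ C, ∀ v, K * v - C ≤ ∫ t in (0 : ℝ)..v, F t := by
  obtain ⟨a, rfl⟩ : K ∈ range F := mem_range_of_exists_le_of_exists_ge hF
    (hbot.eventually_le_const hK).exists (htop.eventually_ge_atTop K).exists
  refine ⟨F a * a - ∫ t in (0 : ℝ)..a, F t, fun v => ?_⟩
  rw [← intervalIntegral.integral_add_adjacent_intervals (hF.intervalIntegrable 0 a)
    (hF.intervalIntegrable a v)]
  linarith [mul_sub_le_intervalIntegral_of_monotone hmono a v]

lemma pos_of_strictMono_of_tendsto_atBot_zero {F : ℝ → ℝ} (hF : StrictMono F)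
    (hbot : Tendsto F atBot (𝓝 0)) (x : ℝ) : 0 < F x :=
  (hF.monotone.le_of_tendsto hbot (x - 1)).trans_lt (hF (sub_one_lt x))

end Calculus

section CosMoment

/-- The `k`-th cosine moment `∫₀^π cosᵏ θ · F(A + B cos θ) dθ` of the profile `F`, as a function of
`p = (A, B)`. -/
noncomputable def cosMoment (k : ℕ) (F : ℝ → ℝ) (p : ℝ × ℝ) : ℝ :=
  ∫ θ in (0 : ℝ)..Real.pi, Real.cos θ ^ k * F (p.1 + p.2 * Real.cos θ)

variable {F : ℝ → ℝ}

lemma continuous_cosMoment (hF : Continuous F) (k : ℕ) : Continuous (cosMoment k F) :=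
  intervalIntegral.continuous_parametric_intervalIntegral_of_continuous' (by fun_prop) _ _

lemma hasFDerivAt_cosMoment {F' : ℝ → ℝ} (hF : ∀ u, HasDerivAt F (F' u) u)
    (hF' : Continuous F') (k : ℕ) (p : ℝ × ℝ) :
    HasFDerivAt (cosMoment k F)
      (cosMoment k F' p • ContinuousLinearMap.fst ℝ ℝ ℝ +
        cosMoment (k + 1) F' p • ContinuousLinearMap.snd ℝ ℝ ℝ) p := by
  have hFc : Continuous F := continuous_iff_continuousAt.2 fun u => (hF u).continuousAt
  have hint := hasFDerivAt_intervalIntegral_of_continuous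
    (f := fun q θ => Real.cos θ ^ k * F (q.1 + q.2 * Real.cos θ))
    (f' := fun q θ =>
      (Real.cos θ ^ k * F' (q.1 + q.2 * Real.cos θ)) • ContinuousLinearMap.fst ℝ ℝ ℝ +
        (Real.cos θ ^ (k + 1) * F' (q.1 + q.2 * Real.cos θ)) • ContinuousLinearMap.snd ℝ ℝ ℝ)
    (fun q => by fun_prop) (by fun_prop) (fun q θ => ?_) 0 Real.pi p
  · refine hint.congr_fderiv ?_
    rw [intervalIntegral.integral_add (Continuous.intervalIntegrable (by fun_prop) _ _)
      (Continuous.intervalIntegrable (by fun_prop) _ _), intervalIntegral.integral_smul_const,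
      intervalIntegral.integral_smul_const]
    rfl
  · have harg : HasFDerivAt (fun q : ℝ × ℝ => q.1 + q.2 * Real.cos θ)
        (ContinuousLinearMap.fst ℝ ℝ ℝ + Real.cos θ • ContinuousLinearMap.snd ℝ ℝ ℝ) q :=
      hasFDerivAt_fst.add (hasFDerivAt_snd.mul_const _)
    refine (((hF _).comp_hasFDerivAt q harg).const_mul (Real.cos θ ^ k)).congr_fderiv ?_
    module

lemma contDiff_cosMoment (hF : ContDiff ℝ 1 F) (k : ℕ) : ContDiff ℝ 1 (cosMoment k F) := by
  obtain ⟨hdiff, hF'⟩ := contDiff_one_iff_deriv.1 hF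
  have hm (j : ℕ) : Continuous (cosMoment j (deriv F)) := continuous_cosMoment hF' j
  exact contDiff_one_iff_hasFDerivAt.2
    ⟨_, by fun_prop, hasFDerivAt_cosMoment (fun u => (hdiff u).hasDerivAt) hF' k⟩

lemma exists_add_mul_cos_ne_zero {v : ℝ × ℝ} (hv : v ≠ 0) :
    ∃ θ ∈ Icc 0 Real.pi, v.1 + v.2 * Real.cos θ ≠ 0 := by
  by_contra! hzero
  have h0 := hzero 0 ⟨le_rfl, Real.pi_pos.le⟩
  have hπ := hzero Real.pi ⟨Real.pi_pos.le, le_rfl⟩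
  rw [Real.cos_zero] at h0
  rw [Real.cos_pi] at hπ
  exact hv (Prod.ext (by linarith : v.1 = 0) (by linarith : v.2 = 0))

lemma cosMoment_linearCombination (hF : Continuous F) (a b : ℝ) (k : ℕ) (p : ℝ × ℝ) :
    a * cosMoment k F p + b * cosMoment (k + 1) F p =
      ∫ θ in (0 : ℝ)..Real.pi,
        (a + b * Real.cos θ) * (Real.cos θ ^ k * F (p.1 + p.2 * Real.cos θ)) := by
  unfold cosMoment
  rw [← intervalIntegral.integral_const_mul, ← intervalIntegral.integral_const_mul,
    ← intervalIntegral.integral_add (Continuous.intervalIntegrable (by fun_prop) _ _)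
      (Continuous.intervalIntegrable (by fun_prop) _ _)]
  congr 1 with θ
  ring

lemma cosMoment_linearCombination_pos (hF : Continuous F) (hF_pos : ∀ u, 0 < F u) {a b : ℝ}
    (ha : 0 < a) (hab : |b| ≤ a) (p : ℝ × ℝ) :
    0 < a * cosMoment 0 F p + b * cosMoment 1 F p := by
  have hweight (θ : ℝ) : 0 ≤ a + b * Real.cos θ := by
    have hle : |b * Real.cos θ| ≤ a := by
      rw [abs_mul]
      exact (mul_le_of_le_one_right (abs_nonneg b) (Real.abs_cos_le_one θ)).trans hab
    linarith [(abs_le.1 hle).1]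
  rw [cosMoment_linearCombination hF a b 0]
  simp only [pow_zero, one_mul]
  refine intervalIntegral.integral_pos Real.pi_pos (by fun_prop)
    (fun θ _ => mul_nonneg (hweight θ) (hF_pos _).le)
    ⟨Real.pi / 2, ⟨by positivity, by linarith [Real.pi_pos]⟩, ?_⟩
  rw [Real.cos_pi_div_two, mul_zero, add_zero]
  exact mul_pos ha (hF_pos _)

lemma cosMoment_zero_pos (hF : Continuous F) (hF_pos : ∀ u, 0 < F u) (p : ℝ × ℝ) :
    0 < cosMoment 0 F p := by
  simpa using cosMoment_linearCombination_pos hF hF_pos one_pos (by simp : |(0 : ℝ)| ≤ 1) p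

lemma abs_cosMoment_one_lt (hF : Continuous F) (hF_pos : ∀ u, 0 < F u) (p : ℝ × ℝ) :
    |cosMoment 1 F p| < cosMoment 0 F p := by
  have hplus := cosMoment_linearCombination_pos hF hF_pos one_pos (b := 1) (by simp) p
  have hminus := cosMoment_linearCombination_pos hF hF_pos one_pos (b := -1) (by simp) p
  rw [abs_lt]
  constructor <;> linarith

lemma cosMoment_quadraticForm_pos (hF : Continuous F) (hF_pos : ∀ u, 0 < F u) {v : ℝ × ℝ}
    (hv : v ≠ 0) (p : ℝ × ℝ) :
    0 < v.1 * (v.1 * cosMoment 0 F p + v.2 * cosMoment 1 F p) +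
      v.2 * (v.1 * cosMoment 1 F p + v.2 * cosMoment 2 F p) := by
  obtain ⟨θ₀, hθ₀, hne⟩ := exists_add_mul_cos_ne_zero hv
  have hpos : 0 < ∫ θ in (0 : ℝ)..Real.pi,
      (v.1 + v.2 * Real.cos θ) ^ 2 * F (p.1 + p.2 * Real.cos θ) :=
    intervalIntegral.integral_pos Real.pi_pos (by fun_prop)
      (fun θ _ => mul_nonneg (sq_nonneg _) (hF_pos _).le)
      ⟨θ₀, hθ₀, mul_pos (by positivity) (hF_pos _)⟩
  refine hpos.trans_eq ?_
  rw [cosMoment_linearCombination hF _ _ 0, cosMoment_linearCombination hF _ _ 1,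
    ← intervalIntegral.integral_const_mul, ← intervalIntegral.integral_const_mul,
    ← intervalIntegral.integral_add (Continuous.intervalIntegrable (by fun_prop) _ _)
      (Continuous.intervalIntegrable (by fun_prop) _ _)]
  congr 1 with θ
  ring

lemma cosMoment_strictMonotone (hF : Continuous F) (hmono : StrictMono F) {p q : ℝ × ℝ}
    (hpq : p ≠ q) :
    0 < (p.1 - q.1) * (cosMoment 0 F p - cosMoment 0 F q) +
      (p.2 - q.2) * (cosMoment 1 F p - cosMoment 1 F q) := by
  obtain ⟨θ₀, hθ₀, hne⟩ := exists_add_mul_cos_ne_zero (sub_ne_zero.2 hpq)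
  have hnonneg := (hmono.monotone.monovary monotone_id).sub_mul_sub_nonneg
  have harg : p.1 + p.2 * Real.cos θ₀ ≠ q.1 + q.2 * Real.cos θ₀ := by
    intro h
    apply hne
    simp only [Prod.fst_sub, Prod.snd_sub]
    linarith
  have hpos : 0 < ∫ θ in (0 : ℝ)..Real.pi,
      (F (p.1 + p.2 * Real.cos θ) - F (q.1 + q.2 * Real.cos θ)) *
        ((p.1 + p.2 * Real.cos θ) - (q.1 + q.2 * Real.cos θ)) :=
    intervalIntegral.integral_pos Real.pi_pos (by fun_prop)
      (fun θ _ => hnonneg _ _)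
      ⟨θ₀, hθ₀, (hnonneg _ _).lt_of_ne' (mul_ne_zero
        (sub_ne_zero.2 (hmono.injective.ne harg)) (sub_ne_zero.2 harg))⟩
  have hregroup : (p.1 - q.1) * (cosMoment 0 F p - cosMoment 0 F q) +
      (p.2 - q.2) * (cosMoment 1 F p - cosMoment 1 F q) =
      ((p.1 - q.1) * cosMoment 0 F p + (p.2 - q.2) * cosMoment 1 F p) -
        ((p.1 - q.1) * cosMoment 0 F q + (p.2 - q.2) * cosMoment 1 F q) := by ring
  rw [hregroup, cosMoment_linearCombination hF _ _ 0, cosMoment_linearCombination hF _ _ 0,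
    ← intervalIntegral.integral_sub (Continuous.intervalIntegrable (by fun_prop) _ _)
      (Continuous.intervalIntegrable (by fun_prop) _ _)]
  refine hpos.trans_eq ?_
  congr 1 with θ
  ring

lemma cosMoment_one_mk_zero (F : ℝ → ℝ) (A : ℝ) : cosMoment 1 F (A, 0) = 0 := by
  simp [cosMoment]

lemma sign_cosMoment_one (hF : Continuous F) (hmono : StrictMono F) (p : ℝ × ℝ) :
    SignType.sign (cosMoment 1 F p) = SignType.sign p.2 := by
  obtain ⟨A, B⟩ := p
  have hpos (hB : B ≠ 0) : 0 < B * cosMoment 1 F (A, B) := by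
    simpa [cosMoment_one_mk_zero] using
      cosMoment_strictMonotone hF hmono (p := (A, B)) (q := (A, 0)) (by simpa using hB)
  rcases lt_trichotomy B 0 with hB | rfl | hB
  · rw [sign_neg hB, sign_neg (neg_of_mul_pos_right (hpos hB.ne) hB.le)]
  · rw [cosMoment_one_mk_zero]
  · rw [sign_pos hB, sign_pos (pos_of_mul_pos_right (hpos hB.ne') hB.le)]

/-- The pair of the first two cosine moments, the gradient of `cosMoment 0 f` for a primitive `f`
of `F`. -/
noncomputable def cosMomentPair (F : ℝ → ℝ) (p : ℝ × ℝ) : ℝ × ℝ :=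
  (cosMoment 0 F p, cosMoment 1 F p)

lemma injective_cosMomentPair (hF : Continuous F) (hmono : StrictMono F) :
    Function.Injective (cosMomentPair F) := by
  intro p q hpq
  obtain ⟨h0, h1⟩ := Prod.mk.inj hpq
  by_contra hne
  simpa [h0, h1] using cosMoment_strictMonotone hF hmono hne

lemma injective_fderiv_cosMomentPair (hF : ContDiff ℝ 1 F) (hF' : ∀ u, 0 < deriv F u)
    (p : ℝ × ℝ) : Function.Injective (fderiv ℝ (cosMomentPair F) p) := by
  obtain ⟨hdiff, hcont⟩ := contDiff_one_iff_deriv.1 hF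
  have hm (k : ℕ) := hasFDerivAt_cosMoment (fun u => (hdiff u).hasDerivAt) hcont k p
  rw [HasFDerivAt.fderiv (f := cosMomentPair F) ((hm 0).prodMk (hm 1)),
    injective_iff_map_eq_zero]
  intro v hv
  have h0 : cosMoment 0 (deriv F) p * v.1 + cosMoment 1 (deriv F) p * v.2 = 0 :=
    congrArg Prod.fst hv
  have h1 : cosMoment 1 (deriv F) p * v.1 + cosMoment 2 (deriv F) p * v.2 = 0 :=
    congrArg Prod.snd hv
  by_contra hne
  refine (cosMoment_quadraticForm_pos hcont hF' hne p).ne' ?_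
  linear_combination v.1 * h0 + v.2 * h1

lemma intervalIntegral_comp_cos_zero_two_pi {h : ℝ → ℝ} (hh : Continuous h) :
    ∫ θ in (0 : ℝ)..2 * Real.pi, h (Real.cos θ) =
      2 * ∫ θ in (0 : ℝ)..Real.pi, h (Real.cos θ) := by
  have hint (a b : ℝ) : IntervalIntegrable (fun θ => h (Real.cos θ)) volume a b :=
    Continuous.intervalIntegrable (by fun_prop) a b
  have hrefl : ∫ θ in Real.pi..2 * Real.pi, h (Real.cos θ) =
      ∫ θ in (0 : ℝ)..Real.pi, h (Real.cos θ) := by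
    have hsub := intervalIntegral.integral_comp_sub_left (a := 0) (b := Real.pi)
      (fun θ => h (Real.cos θ)) (2 * Real.pi)
    simp only [Real.cos_two_pi_sub, sub_zero] at hsub
    rw [hsub, two_mul, add_sub_cancel_right]
  rw [← intervalIntegral.integral_add_adjacent_intervals (hint 0 Real.pi) (hint _ _), hrefl,
    two_mul]

lemma cosMoment_zero_eq_circleAverage (hF : Continuous F) (p : ℝ × ℝ) :
    cosMoment 0 F p =
      Real.pi * Real.circleAverage (fun z => F (p.1 + p.2 * z.re)) 0 1 := by
  have hre (θ : ℝ) : (circleMap 0 1 θ).re = Real.cos θ := by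
    rw [circleMap_zero, Complex.ofReal_one, one_mul, Complex.exp_ofReal_mul_I_re]
  simp only [Real.circleAverage_def, hre, smul_eq_mul, cosMoment, pow_zero, one_mul]
  rw [intervalIntegral_comp_cos_zero_two_pi (h := fun c => F (p.1 + p.2 * c)) (by fun_prop)]
  field_simp

lemma circleAverage_poissonKernel_smul_affine {r : ℝ} (hr : |r| < 1) (a b : ℝ) :
    Real.circleAverage (poissonKernel 0 r • fun z => a + b * z.re) 0 1 = a + b * r := by
  have hharm : InnerProductSpace.HarmonicOnNhd (fun z : ℂ => a + b * z.re)
      (Metric.closedBall 0 1) := fun z _ => by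
    simpa using (show AnalyticAt ℂ (fun w : ℂ => a + b * w) z by fun_prop).harmonicAt_re
  simpa using hharm.circleAverage_poissonKernel_smul (w := r) (by simpa using hr)

lemma poissonKernel_mem_Icc {c w z : ℂ} {R : ℝ} (hz : z ∈ Metric.sphere c R)
    (hw : w ∈ Metric.ball c R) :
    poissonKernel c w z ∈ Icc ((R - ‖w - c‖) / (R + ‖w - c‖)) ((R + ‖w - c‖) / (R - ‖w - c‖)) := by
  rw [poissonKernel_eq_re_herglotzRieszKernel]
  exact ⟨le_re_herglotzRieszKernel hz hw, re_herglotzRieszKernel_le hz hw⟩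

lemma exists_forall_mem_Icc_mul_sub_le {f : ℝ → ℝ} (hf : ∀ K > 0, ∃ C, ∀ v, K * v - C ≤ f v)
    {a b : ℝ} (ha : 0 < a) (hb : 0 < b) : ∃ C, ∀ K ∈ Icc a b, ∀ v, K * v - C ≤ f v := by
  obtain ⟨Ca, hCa⟩ := hf a ha
  obtain ⟨Cb, hCb⟩ := hf b hb
  refine ⟨max Ca Cb, fun K hK v => ?_⟩
  rcases le_total 0 v with hv | hv
  · linarith [hCb v, le_max_right Ca Cb, mul_le_mul_of_nonneg_right hK.2 hv]
  · linarith [hCa v, le_max_left Ca Cb, mul_le_mul_of_nonpos_right hK.1 hv]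

lemma exists_mul_poissonKernel_mul_sub_le {f : ℝ → ℝ} (hf : ∀ K > 0, ∃ C, ∀ v, K * v - C ≤ f v)
    {x R : ℝ} (hx : 0 < x) {c w : ℂ} (hw : w ∈ Metric.ball c R) :
    ∃ C, ∀ z ∈ Metric.sphere c R, ∀ v, x * poissonKernel c w z * v - C ≤ f v := by
  have hR : 0 < R := Metric.pos_of_mem_ball hw
  have hsub : 0 < R - ‖w - c‖ := sub_pos.2 (mem_ball_iff_norm.1 hw)
  obtain ⟨C, hC⟩ := exists_forall_mem_Icc_mul_sub_le hf
    (a := x * ((R - ‖w - c‖) / (R + ‖w - c‖))) (b := x * ((R + ‖w - c‖) / (R - ‖w - c‖)))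
    (by positivity) (by positivity)
  refine ⟨C, fun z hz => hC _ ?_⟩
  obtain ⟨hlow, hupp⟩ := poissonKernel_mem_Icc hz hw
  exact ⟨mul_le_mul_of_nonneg_left hlow hx.le, mul_le_mul_of_nonneg_left hupp hx.le⟩

lemma circleIntegrable_poissonKernel_smul {R : ℝ} {c w : ℂ} (hw : w ∈ Metric.ball c R) {u : ℂ → ℝ}
    (hu : Continuous u) : CircleIntegrable (poissonKernel c w • u) c R := by
  have hR : 0 < R := Metric.pos_of_mem_ball hw
  have hkernel := continuousOn_herglotzRieszKernel_sphere hw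
  rw [abs_of_pos hR] at hkernel
  rw [poissonKernel_eq_re_herglotzRieszKernel]
  exact ((Complex.continuous_re.comp_continuousOn hkernel).smul
    hu.continuousOn).circleIntegrable hR.le

/-- The multiple of the Poisson kernel with pole `y / x` is a positive density on the circle whose
total mass and cosine moment are proportional to `x` and `y`; being pinched between positive
constants, it can serve pointwise as the slope in the linear lower bounds for `f`. -/
lemma exists_linear_sub_le_cosMoment_zero {f : ℝ → ℝ} (hf : Continuous f)
    (hf_le : ∀ K > 0, ∃ C, ∀ v, K * v - C ≤ f v) {x y : ℝ} (hxy : |y| < x) :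
    ∃ C, ∀ p : ℝ × ℝ, x * p.1 + y * p.2 - C ≤ cosMoment 0 f p := by
  have hπ := Real.pi_pos
  have hx : 0 < x := (abs_nonneg y).trans_lt hxy
  have hr : |y / x| < 1 := by rwa [abs_div, abs_of_pos hx, div_lt_one hx]
  have hball : ((y / x : ℝ) : ℂ) ∈ Metric.ball (0 : ℂ) 1 := by
    rwa [mem_ball_zero_iff, Complex.norm_real]
  obtain ⟨C, hC⟩ := exists_mul_poissonKernel_mul_sub_le hf_le (div_pos hx hπ) hball
  refine ⟨Real.pi * C, fun p => ?_⟩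
  let u : ℂ → ℝ := fun z => x / Real.pi * p.1 + x / Real.pi * p.2 * z.re
  have hmean : Real.circleAverage (poissonKernel 0 (y / x : ℝ) • u) 0 1 =
      x / Real.pi * p.1 + x / Real.pi * p.2 * (y / x) :=
    circleAverage_poissonKernel_smul_affine hr _ _
  have hint : CircleIntegrable (poissonKernel 0 (y / x : ℝ) • u) 0 1 :=
    circleIntegrable_poissonKernel_smul hball (by fun_prop)
  have hle : Real.circleAverage (fun z => (poissonKernel 0 (y / x : ℝ) • u) z - C) 0 1 ≤
      Real.circleAverage (fun z => f (p.1 + p.2 * z.re)) 0 1 := by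
    refine Real.circleAverage_mono (hint.sub (circleIntegrable_const C 0 1))
      (by fun_prop : Continuous fun z : ℂ => f (p.1 + p.2 * z.re)).continuousOn.circleIntegrable'
      fun z hz => le_of_eq_of_le ?_ (hC z (by rwa [abs_one] at hz) (p.1 + p.2 * z.re))
    simp only [u, Pi.smul_apply', smul_eq_mul]
    ring
  rw [Real.circleAverage_fun_sub hint (circleIntegrable_const C 0 1), hmean,
    Real.circleAverage_const] at hle
  calc x * p.1 + y * p.2 - Real.pi * C
      = Real.pi * (x / Real.pi * p.1 + x / Real.pi * p.2 * (y / x) - C) := by field_simp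
    _ ≤ Real.pi * Real.circleAverage (fun z => f (p.1 + p.2 * z.re)) 0 1 := by gcongr
    _ = cosMoment 0 f p := (cosMoment_zero_eq_circleAverage hf p).symm

lemma exists_mul_norm_sub_le_cosMoment_zero_sub {f : ℝ → ℝ} (hf : Continuous f)
    (hf_le : ∀ K > 0, ∃ C, ∀ v, K * v - C ≤ f v) {x y : ℝ} (hxy : |y| < x) :
    ∃ τ > 0, ∃ C, ∀ p : ℝ × ℝ,
      τ * ‖p‖ - C ≤ cosMoment 0 f p - (x * p.1 + y * p.2) := by
  set τ := (x - |y|) / 2 with hτ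
  have hτ_pos : 0 < τ := half_pos (sub_pos.2 hxy)
  obtain ⟨C₁, h₁⟩ := exists_linear_sub_le_cosMoment_zero hf hf_le (x := x + τ) (y := y)
    (by linarith)
  obtain ⟨C₂, h₂⟩ := exists_linear_sub_le_cosMoment_zero hf hf_le (x := x - τ) (y := y)
    (by linarith)
  obtain ⟨C₃, h₃⟩ := exists_linear_sub_le_cosMoment_zero hf hf_le (x := x) (y := y + τ)
    ((abs_add_le _ _).trans_lt (by rw [abs_of_pos hτ_pos]; linarith))
  obtain ⟨C₄, h₄⟩ := exists_linear_sub_le_cosMoment_zero hf hf_le (x := x) (y := y - τ)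
    ((abs_sub _ _).trans_lt (by rw [abs_of_pos hτ_pos]; linarith))
  refine ⟨τ, hτ_pos, max (max C₁ C₂) (max C₃ C₄), fun p => ?_⟩
  rw [sub_le_iff_le_add, Prod.norm_def, mul_max_of_nonneg _ _ hτ_pos.le, max_le_iff]
  have h₁₂ := le_max_left (max C₁ C₂) (max C₃ C₄)
  have h₃₄ := le_max_right (max C₁ C₂) (max C₃ C₄)
  constructor
  · rcases abs_cases p.1 with ⟨h, _⟩ | ⟨h, _⟩ <;> rw [Real.norm_eq_abs, h]
    · linarith [h₁ p, le_max_left C₁ C₂]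
    · linarith [h₂ p, le_max_right C₁ C₂]
  · rcases abs_cases p.2 with ⟨h, _⟩ | ⟨h, _⟩ <;> rw [Real.norm_eq_abs, h]
    · linarith [h₃ p, le_max_left C₃ C₄]
    · linarith [h₄ p, le_max_right C₃ C₄]

lemma tendsto_cosMoment_zero_sub_cocompact {f : ℝ → ℝ} (hf : Continuous f)
    (hf_le : ∀ K > 0, ∃ C, ∀ v, K * v - C ≤ f v) {x y : ℝ} (hxy : |y| < x) :
    Tendsto (fun p : ℝ × ℝ => cosMoment 0 f p - (x * p.1 + y * p.2)) (cocompact (ℝ × ℝ)) atTop := by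
  obtain ⟨τ, hτ, C, hC⟩ := exists_mul_norm_sub_le_cosMoment_zero_sub hf hf_le hxy
  exact tendsto_atTop_mono hC (tendsto_atTop_add_const_right _ (-C)
    ((tendsto_norm_cocompact_atTop (E := ℝ × ℝ)).const_mul_atTop hτ))

lemma exists_cosMomentPair_eq (hF : Continuous F) (hmono : Monotone F)
    (hbot : Tendsto F atBot (𝓝 0)) (htop : Tendsto F atTop atTop) {q : ℝ × ℝ} (hq : |q.2| < q.1) :
    ∃ p, cosMomentPair F p = q := by
  let f : ℝ → ℝ := fun u => ∫ t in (0 : ℝ)..u, F t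
  have hf (u : ℝ) : HasDerivAt f (F u) u := intervalIntegral.integral_hasDerivAt_right
    (hF.intervalIntegrable _ _) hF.aestronglyMeasurable.stronglyMeasurableAtFilter hF.continuousAt
  have hfc : Continuous f := continuous_iff_continuousAt.2 fun u => (hf u).continuousAt
  let G : ℝ × ℝ → ℝ := fun p => cosMoment 0 f p - (q.1 * p.1 + q.2 * p.2)
  have hG (p : ℝ × ℝ) : HasFDerivAt G
      ((cosMoment 0 F p • ContinuousLinearMap.fst ℝ ℝ ℝ +
        cosMoment 1 F p • ContinuousLinearMap.snd ℝ ℝ ℝ) -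
      (q.1 • ContinuousLinearMap.fst ℝ ℝ ℝ + q.2 • ContinuousLinearMap.snd ℝ ℝ ℝ)) p :=
    (hasFDerivAt_cosMoment hf hF 0 p).sub
      ((hasFDerivAt_fst.const_mul q.1).add (hasFDerivAt_snd.const_mul q.2))
  have hGc : Continuous G := continuous_iff_continuousAt.2 fun p => (hG p).continuousAt
  obtain ⟨p, hp⟩ := hGc.exists_forall_le (tendsto_cosMoment_zero_sub_cocompact hfc
    (fun K hK => exists_mul_sub_le_intervalIntegral hF hmono hbot htop hK) hq)
  have hzero := IsLocalMin.hasFDerivAt_eq_zero (Eventually.of_forall hp) (hG p)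
  refine ⟨p, Prod.ext (sub_eq_zero.1 ?_) (sub_eq_zero.1 ?_)⟩
  · simpa [cosMomentPair] using DFunLike.congr_fun hzero (1, 0)
  · simpa [cosMomentPair] using DFunLike.congr_fun hzero (0, 1)

end CosMoment

section CosMeanRatio

/-- The map `Φ` of the theorem for an arbitrary profile `F` in place of the Fermi integral: the mean
of `θ ↦ F(A + B cos θ)` over `[0, π]`, and the ratio of its first two cosine moments. -/
noncomputable def cosMeanRatio (F : ℝ → ℝ) (p : ℝ × ℝ) : ℝ × ℝ :=
  (cosMoment 0 F p / Real.pi, cosMoment 1 F p / cosMoment 0 F p)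

variable {F : ℝ → ℝ}

lemma cosMomentPair_eq_comp_cosMeanRatio (hF : Continuous F) (hF_pos : ∀ u, 0 < F u) :
    cosMomentPair F = (fun y => (Real.pi * y.1, Real.pi * y.1 * y.2)) ∘ cosMeanRatio F := by
  ext p <;> have := (cosMoment_zero_pos hF hF_pos p).ne' <;>
    simp only [cosMomentPair, cosMeanRatio, Function.comp_apply] <;> field_simp

lemma contDiff_cosMeanRatio (hF : ContDiff ℝ 1 F) (hF_pos : ∀ u, 0 < F u) :
    ContDiff ℝ 1 (cosMeanRatio F) :=
  ((contDiff_cosMoment hF 0).div_const _).prodMk ((contDiff_cosMoment hF 1).div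
    (contDiff_cosMoment hF 0) fun p => (cosMoment_zero_pos hF.continuous hF_pos p).ne')

lemma injective_cosMeanRatio (hF : Continuous F) (hmono : StrictMono F) (hF_pos : ∀ u, 0 < F u) :
    Function.Injective (cosMeanRatio F) := by
  have hinj := injective_cosMomentPair hF hmono
  rw [cosMomentPair_eq_comp_cosMeanRatio hF hF_pos] at hinj
  exact hinj.of_comp

lemma injective_fderiv_cosMeanRatio (hF : ContDiff ℝ 1 F) (hF' : ∀ u, 0 < deriv F u)
    (hF_pos : ∀ u, 0 < F u) (p : ℝ × ℝ) : Function.Injective (fderiv ℝ (cosMeanRatio F) p) := by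
  have hinj := injective_fderiv_cosMomentPair hF hF' p
  rw [cosMomentPair_eq_comp_cosMeanRatio hF.continuous hF_pos, fderiv_comp p (by fun_prop)
    ((contDiff_cosMeanRatio hF hF_pos).differentiable one_ne_zero p),
    ContinuousLinearMap.coe_comp] at hinj
  exact hinj.of_comp

lemma bijOn_cosMeanRatio (hF : Continuous F) (hmono : StrictMono F)
    (hbot : Tendsto F atBot (𝓝 0)) (htop : Tendsto F atTop atTop) :
    BijOn (cosMeanRatio F) univ (Ioi 0 ×ˢ Ioo (-1) 1) := by
  have hπ := Real.pi_pos
  have hF_pos := pos_of_strictMono_of_tendsto_atBot_zero hmono hbot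
  refine ⟨fun p _ => ?_, (injective_cosMeanRatio hF hmono hF_pos).injOn, ?_⟩
  · have hpos := cosMoment_zero_pos hF hF_pos p
    have hratio : |cosMoment 1 F p / cosMoment 0 F p| < 1 := by
      rw [abs_div, abs_of_pos hpos, div_lt_one hpos]
      exact abs_cosMoment_one_lt hF hF_pos p
    exact ⟨div_pos hpos hπ, abs_lt.1 hratio⟩
  · rintro ⟨x, r⟩ ⟨hx, hr⟩
    have hx : 0 < x := hx
    obtain ⟨p, hp⟩ := exists_cosMomentPair_eq hF hmono.monotone hbot htop
      (q := (Real.pi * x, Real.pi * x * r)) (by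
        rw [abs_mul, abs_of_pos (by positivity)]
        exact mul_lt_of_lt_one_right (by positivity) (abs_lt.2 hr))
    obtain ⟨h0, h1⟩ := Prod.mk.inj hp
    refine ⟨p, mem_univ _, ?_⟩
    rw [cosMeanRatio, h0, h1]
    ext <;> field_simp

lemma sign_cosMeanRatio_snd (hF : Continuous F) (hmono : StrictMono F) (hF_pos : ∀ u, 0 < F u)
    (p : ℝ × ℝ) : SignType.sign (cosMeanRatio F p).2 = SignType.sign p.2 := by
  change SignType.sign (cosMoment 1 F p / cosMoment 0 F p) = _
  rw [div_eq_mul_inv, sign_mul, sign_pos (inv_pos.2 (cosMoment_zero_pos hF hF_pos p)), mul_one,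
    sign_cosMoment_one hF hmono p]

lemma bijOn_cosMeanRatio_prod (hF : Continuous F) (hmono : StrictMono F)
    (hbot : Tendsto F atBot (𝓝 0)) (htop : Tendsto F atTop atTop) {I J : Set ℝ}
    (hJ : J ⊆ Ioo (-1) 1)
    (hIJ : ∀ b, ∀ r ∈ Ioo (-1 : ℝ) 1, SignType.sign r = SignType.sign b → (r ∈ J ↔ b ∈ I)) :
    BijOn (cosMeanRatio F) (univ ×ˢ I) (Ioi 0 ×ˢ J) := by
  have hbij := bijOn_cosMeanRatio hF hmono hbot htop
  have hF_pos := pos_of_strictMono_of_tendsto_atBot_zero hmono hbot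
  convert hbij.subset_right (prod_mono_right hJ) using 1
  ext p
  obtain ⟨hfst, hsnd⟩ := hbij.mapsTo (mem_univ p)
  have hiff := hIJ _ _ hsnd (sign_cosMeanRatio_snd hF hmono hF_pos p)
  simp only [mem_prod, mem_univ, true_and, univ_inter, mem_preimage, hfst, hiff]

lemma bijOn_cosMeanRatio_Ici (hF : Continuous F) (hmono : StrictMono F)
    (hbot : Tendsto F atBot (𝓝 0)) (htop : Tendsto F atTop atTop) :
    BijOn (cosMeanRatio F) (univ ×ˢ Ici 0) (Ioi 0 ×ˢ Ico 0 1) :=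
  bijOn_cosMeanRatio_prod hF hmono hbot htop (Ico_subset_Ioo_left (by norm_num))
    fun b r hr hsign => by
      rw [mem_Ico, mem_Ici, ← sign_nonneg_iff, hsign, sign_nonneg_iff, and_iff_left hr.2]

lemma bijOn_cosMeanRatio_Ioi (hF : Continuous F) (hmono : StrictMono F)
    (hbot : Tendsto F atBot (𝓝 0)) (htop : Tendsto F atTop atTop) :
    BijOn (cosMeanRatio F) (univ ×ˢ Ioi 0) (Ioi 0 ×ˢ Ioo 0 1) :=
  bijOn_cosMeanRatio_prod hF hmono hbot htop (Ioo_subset_Ioo_left (by norm_num))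
    fun b r hr hsign => by
      rw [mem_Ioo, mem_Ioi, ← sign_eq_one_iff, hsign, sign_eq_one_iff, and_iff_left hr.2]

lemma contDiffOn_invFun_cosMeanRatio (hF : ContDiff ℝ 1 F) (hF' : ∀ u, 0 < deriv F u)
    (hbot : Tendsto F atBot (𝓝 0)) (htop : Tendsto F atTop atTop) :
    ContDiffOn ℝ 1 (Function.invFun (cosMeanRatio F)) (Ioi 0 ×ˢ Ioo (-1) 1) := by
  have hmono := strictMono_of_deriv_pos hF'
  have hF_pos := pos_of_strictMono_of_tendsto_atBot_zero hmono hbot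
  intro y hy
  obtain ⟨p, -, rfl⟩ := (bijOn_cosMeanRatio hF.continuous hmono hbot htop).surjOn hy
  exact (contDiffAt_invFun_of_injective_fderiv one_ne_zero
    (injective_cosMeanRatio hF.continuous hmono hF_pos)
    (contDiff_cosMeanRatio hF hF_pos).contDiffAt
    (injective_fderiv_cosMeanRatio hF hF' hF_pos p)).contDiffWithinAt

end CosMeanRatio

/-- The map `Φ` with the Fermi integral of arbitrary order `s`, so that `Phi = fermiMap 2`. -/
noncomputable def fermiMap (s : ℝ) (p : ℝ × ℝ) : ℝ × ℝ :=
  (calI 0 s p.1 p.2, calI 1 s p.1 p.2 / calI 0 s p.1 p.2)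

lemma fermiMap_eq_cosMeanRatio (s : ℝ) : fermiMap s = cosMeanRatio (fermi s) := by
  have h0 (p : ℝ × ℝ) : calI 0 s p.1 p.2 = 1 / Real.pi * cosMoment 0 (fermi s) p := by
    simp [calI, cosMoment]
  have h1 (p : ℝ × ℝ) : calI 1 s p.1 p.2 = 1 / Real.pi * cosMoment 1 (fermi s) p := by
    simp [calI, cosMoment]
  ext p
  · rw [fermiMap, cosMeanRatio, h0, one_div_mul_eq_div]
  · rw [fermiMap, cosMeanRatio, h0, h1, mul_div_mul_left _ _ (one_div_ne_zero Real.pi_ne_zero)]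

theorem phi_bijective_and_C1_diffeo_general {s : ℝ} (hs : 0 < s) :
    Set.BijOn (fermiMap s) (Set.univ ×ˢ Set.Ici (0 : ℝ)) (Set.Ioi (0 : ℝ) ×ˢ Set.Ico (0 : ℝ) 1) ∧
    ContDiffOn ℝ 1 (fermiMap s) (Set.univ ×ˢ Set.Ici (0 : ℝ)) ∧
    Set.BijOn (fermiMap s) (Set.univ ×ˢ Set.Ioi (0 : ℝ)) (Set.Ioi (0 : ℝ) ×ˢ Set.Ioo (0 : ℝ) 1) ∧
    ∃ g : ℝ × ℝ → ℝ × ℝ,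
      ContDiffOn ℝ 1 g (Set.Ioi (0 : ℝ) ×ˢ Set.Ioo (0 : ℝ) 1) ∧
      (∀ x ∈ Set.univ ×ˢ Set.Ioi (0 : ℝ), g (fermiMap s x) = x) ∧
      (∀ y ∈ Set.Ioi (0 : ℝ) ×ˢ Set.Ioo (0 : ℝ) 1, fermiMap s (g y) = y) := by
  have hF := contDiff_fermi hs
  have hmono := strictMono_of_deriv_pos (deriv_fermi_pos hs)
  have hbot := tendsto_fermi_atBot hs
  have htop := tendsto_fermi_atTop hs
  have hF_pos := pos_of_strictMono_of_tendsto_atBot_zero hmono hbot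
  have hbij := bijOn_cosMeanRatio_Ioi hF.continuous hmono hbot htop
  rw [fermiMap_eq_cosMeanRatio]
  refine ⟨bijOn_cosMeanRatio_Ici hF.continuous hmono hbot htop,
    (contDiff_cosMeanRatio hF hF_pos).contDiffOn, hbij,
    Function.invFun (cosMeanRatio (fermi s)), ?_, fun x _ => ?_, fun y hy => ?_⟩
  · exact (contDiffOn_invFun_cosMeanRatio hF (deriv_fermi_pos hs) hbot htop).mono
      (prod_mono_right (Ioo_subset_Ioo_left (by norm_num)))
  · exact Function.leftInverse_invFun (injective_cosMeanRatio hF.continuous hmono hF_pos) x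
  · obtain ⟨p, -, hp⟩ := hbij.surjOn hy
    exact Function.invFun_eq ⟨p, hp⟩

/-- `Φ` is a bijection from `ℝ × [0,∞)` onto `(0,∞) × [0,1)`, is `C¹` there
(one-sidedly at `B = 0`), and its restriction to `ℝ × (0,∞)` is a `C¹`
diffeomorphism onto `(0,∞) × (0,1)`. -/
theorem phi_bijective_and_C1_diffeo :
    Set.BijOn Phi (Set.univ ×ˢ Set.Ici (0 : ℝ)) (Set.Ioi (0 : ℝ) ×ˢ Set.Ico (0 : ℝ) 1) ∧
    ContDiffOn ℝ 1 Phi (Set.univ ×ˢ Set.Ici (0 : ℝ)) ∧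
    Set.BijOn Phi (Set.univ ×ˢ Set.Ioi (0 : ℝ)) (Set.Ioi (0 : ℝ) ×ˢ Set.Ioo (0 : ℝ) 1) ∧
    ∃ g : ℝ × ℝ → ℝ × ℝ,
      ContDiffOn ℝ 1 g (Set.Ioi (0 : ℝ) ×ˢ Set.Ioo (0 : ℝ) 1) ∧
      (∀ x ∈ Set.univ ×ˢ Set.Ioi (0 : ℝ), g (Phi x) = x) ∧
      (∀ y ∈ Set.Ioi (0 : ℝ) ×ˢ Set.Ioo (0 : ℝ) 1, Phi (g y) = y) :=
  phi_bijective_and_C1_diffeo_general two_pos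
end

section
/- Let s > 0 and let N ≥ 0 be an integer. For every sequence (A_k, B_k) with B_k > 0 and A_k + B_k → −∞, the ratio 𝓘_N^s(A_k,B_k) / ( e^{A_k} I_N(B_k) ) converges to 1, where I_N(B) = (1/π)∫₀^π cos(Nθ) e^{B cos θ} dθ is the modified Bessel function of the first kind. -/
open MeasureTheory Set Filter

/-- The modified Bessel function of the first kind,
`I_N(B) = (1/π) ∫₀^π cos(Nθ) e^{B cos θ} dθ`. -/
noncomputable def besselI (N : ℕ) (B : ℝ) : ℝ :=
  (1 / Real.pi) * ∫ θ in (0 : ℝ)..Real.pi, Real.cos (N * θ) * Real.exp (B * Real.cos θ)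

/-!
The oscillating weight `cos (N θ)` can be traded for a nonnegative one. Writing
`cos (N θ) = T_N (cos θ)` and integrating by parts `N` times, with Chebyshev's differential equation
supplying the antiderivatives, gives Jacobi's formula
`(2N - 1)!! ∫ cos (N θ) f (cos θ) dθ = ∫ sin θ ^ (2N) f⁽ᴺ⁾ (cos θ) dθ` over `[0, π]`.
Applied to `f x = φ_s (A + B x)` and to `f x = exp (A + B x)`, both integrals acquire the same
factor `B ^ N`, and what remains is to compare `φ_s⁽ᴺ⁾` with `exp` under a nonnegative weight, at
arguments at most `A + |B| → -∞`. There `φ_s⁽ᴺ⁾ ∼ exp`, because on `x < 0` the Fermi integral is the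
series `∑_{m ≥ 1} (-1)^(m-1) e^(mx) / m^s`, which may be differentiated term by term.
-/

section Chebyshev

open Polynomial Polynomial.Chebyshev Real

theorem hasDerivAt_iterate_derivative_T_cos_mul_sin_pow (n : ℤ) (k : ℕ) (θ : ℝ) :
    HasDerivAt (fun θ => (derivative^[k + 1] (T ℝ n)).eval (cos θ) * sin θ ^ (2 * k + 1))
      (((n : ℝ) ^ 2 - k ^ 2) * ((derivative^[k] (T ℝ n)).eval (cos θ) * sin θ ^ (2 * k))) θ := by
  have hT := ((derivative^[k + 1] (T ℝ n)).hasDerivAt (cos θ)).comp θ (hasDerivAt_cos θ)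
  rw [← Function.iterate_succ_apply' derivative] at hT
  convert! hT.mul ((hasDerivAt_sin θ).pow (2 * k + 1)) using 1
  have hode := one_sub_X_sq_mul_iterate_derivative_T_eval n k (cos θ)
  rw [← sin_sq] at hode
  simp only [Function.comp_apply, Pi.pow_apply, Nat.succ_eq_add_one, Nat.add_sub_cancel,
    Nat.cast_add, Nat.cast_mul, Nat.cast_ofNat, Nat.cast_one]
  linear_combination sin θ ^ (2 * k) * hode

theorem integral_iterate_derivative_T_cos_mul_comp_cos (n : ℤ) (k : ℕ) {f f' : ℝ → ℝ}
    (hf : ∀ x ∈ Icc (-1) 1, HasDerivAt f (f' x) x) (hf' : ContinuousOn f' (Icc (-1) 1)) :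
    ((n : ℝ) ^ 2 - k ^ 2) *
        ∫ θ in 0..π, (derivative^[k] (T ℝ n)).eval (cos θ) * sin θ ^ (2 * k) * f (cos θ) =
      ∫ θ in 0..π,
        (derivative^[k + 1] (T ℝ n)).eval (cos θ) * sin θ ^ (2 * (k + 1)) * f' (cos θ) := by
  have hparts := intervalIntegral.integral_mul_deriv_eq_deriv_mul (a := 0) (b := π)
    (fun θ _ => (hf _ (cos_mem_Icc θ)).comp θ (hasDerivAt_cos θ))
    (fun θ _ => hasDerivAt_iterate_derivative_T_cos_mul_sin_pow n k θ)
    (((hf'.comp_continuous continuous_cos cos_mem_Icc).mul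
      continuous_sin.neg).intervalIntegrable _ _)
    (Continuous.intervalIntegrable (by fun_prop) _ _)
  simp only [sin_pi, sin_zero, ne_eq, Nat.succ_ne_zero, not_false_eq_true, zero_pow, mul_zero,
    sub_zero, zero_sub, ← intervalIntegral.integral_neg, Function.comp_apply] at hparts
  rw [← intervalIntegral.integral_const_mul]
  convert! hparts using 3 <;> ring

theorem eval_iterate_derivative_T_self (n : ℕ) (x : ℝ) :
    (∏ j ∈ Finset.range n, (2 * j + 1 : ℝ)) * (derivative^[n] (T ℝ n)).eval x =
      ∏ j ∈ Finset.range n, ((n : ℝ) ^ 2 - j ^ 2) := by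
  have hdeg : (derivative^[n] (T ℝ n)).natDegree = 0 := by
    have := natDegree_iterate_derivative (T ℝ n) n
    simpa [natDegree_T] using this
  have hone := iterate_derivative_T_eval_one (R := ℝ) n n
  rw [eq_C_of_natDegree_eq_zero hdeg, eval_C] at hone ⊢
  exact_mod_cast hone

theorem prod_mul_integral_cos_mul_comp_cos (n : ℤ) (k : ℕ) {F : ℕ → ℝ → ℝ}
    (hF : ∀ j < k, ∀ x ∈ Icc (-1) 1, HasDerivAt (F j) (F (j + 1) x) x)
    (hFk : ContinuousOn (F k) (Icc (-1) 1)) :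
    (∏ j ∈ Finset.range k, ((n : ℝ) ^ 2 - j ^ 2)) * ∫ θ in 0..π, cos (n * θ) * F 0 (cos θ) =
      ∫ θ in 0..π, (derivative^[k] (T ℝ n)).eval (cos θ) * sin θ ^ (2 * k) * F k (cos θ) := by
  induction k with
  | zero => simp [T_real_cos]
  | succ k ih =>
    have hcont : ContinuousOn (F k) (Icc (-1) 1) := fun x hx =>
      (hF k k.lt_succ_self x hx).continuousAt.continuousWithinAt
    rw [Finset.prod_range_succ, mul_right_comm,
      ih (fun j hj => hF j (hj.trans k.lt_succ_self)) hcont, mul_comm,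
      integral_iterate_derivative_T_cos_mul_comp_cos n k (hF k k.lt_succ_self) hFk]

/-- **Jacobi's formula**, with `F k` in the role of the `k`-th derivative of `F 0`. -/
theorem integral_cos_mul_comp_cos (n : ℕ) {F : ℕ → ℝ → ℝ}
    (hF : ∀ k < n, ∀ x ∈ Icc (-1) 1, HasDerivAt (F k) (F (k + 1) x) x)
    (hFn : ContinuousOn (F n) (Icc (-1) 1)) :
    ∫ θ in 0..π, cos (n * θ) * F 0 (cos θ) =
      (∏ j ∈ Finset.range n, (2 * j + 1 : ℝ))⁻¹ *
        ∫ θ in 0..π, sin θ ^ (2 * n) * F n (cos θ) := by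
  have hodd : (∏ j ∈ Finset.range n, (2 * j + 1 : ℝ)) ≠ 0 := by positivity
  have hsq : (∏ j ∈ Finset.range n, ((n : ℝ) ^ 2 - j ^ 2)) ≠ 0 := by
    refine Finset.prod_ne_zero_iff.2 fun j hj => (sub_pos.2 ?_).ne'
    gcongr
    exact Finset.mem_range.1 hj
  rw [eq_inv_mul_iff_mul_eq₀ hodd]
  apply mul_left_cancel₀ hsq
  have hiter := prod_mul_integral_cos_mul_comp_cos n n hF hFn
  rw [Int.cast_natCast] at hiter
  rw [mul_left_comm, hiter, ← intervalIntegral.integral_const_mul,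
    ← intervalIntegral.integral_const_mul]
  simp only [← mul_assoc, eval_iterate_derivative_T_self]

theorem mapsTo_add_mul_Icc_abs (A B : ℝ) :
    MapsTo (fun x => A + B * x) (Icc (-1) 1) (Icc (A - |B|) (A + |B|)) := fun x hx => by
  have := abs_le.1 ((abs_mul B x).trans_le (mul_le_of_le_one_right (abs_nonneg B) (abs_le.2 hx)))
  constructor <;> linarith

theorem integral_cos_mul_comp_affine_cos (n : ℕ) {A B : ℝ} {Φ : ℕ → ℝ → ℝ}
    (hΦ : ∀ k < n, ∀ x ∈ Icc (A - |B|) (A + |B|), HasDerivAt (Φ k) (Φ (k + 1) x) x)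
    (hΦn : ContinuousOn (Φ n) (Icc (A - |B|) (A + |B|))) :
    ∫ θ in 0..π, cos (n * θ) * Φ 0 (A + B * cos θ) =
      B ^ n * (∏ j ∈ Finset.range n, (2 * j + 1 : ℝ))⁻¹ *
        ∫ θ in 0..π, sin θ ^ (2 * n) * Φ n (A + B * cos θ) := by
  have hmaps := mapsTo_add_mul_Icc_abs A B
  have hjacobi := integral_cos_mul_comp_cos n (F := fun k x => B ^ k * Φ k (A + B * x))
    (fun k hk x hx => by
      have haff : HasDerivAt (fun x => A + B * x) B x := by
        simpa using ((hasDerivAt_id x).const_mul B).const_add A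
      convert! ((hΦ k hk _ (hmaps hx)).comp x haff).const_mul (B ^ k) using 1
      ring)
    ((hΦn.comp (by fun_prop) hmaps).const_smul (B ^ n))
  simp only [pow_zero, one_mul, mul_left_comm _ (B ^ n), intervalIntegral.integral_const_mul]
    at hjacobi
  rw [hjacobi, mul_assoc]

end Chebyshev

section Asymptotics

open Real Asymptotics

theorem isEquivalent_integral_of_norm_sub_le {α ι : Type*} [MeasurableSpace α] {μ : Measure α}
    {l : Filter ι} {F G : ι → α → ℝ} (hF : ∀ᶠ i in l, Integrable (F i) μ)
    (hG : ∀ᶠ i in l, Integrable (G i) μ)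
    (hFG : ∀ ε > 0, ∀ᶠ i in l, ∀ᵐ a ∂μ, ‖F i a - G i a‖ ≤ ε * G i a) :
    (fun i => ∫ a, F i a ∂μ) ~[l] fun i => ∫ a, G i a ∂μ := by
  refine isLittleO_iff.2 fun ε hε => ?_
  filter_upwards [hF, hG, hFG ε hε] with i hFi hGi hi
  calc ‖∫ a, F i a ∂μ - ∫ a, G i a ∂μ‖
      = ‖∫ a, (F i a - G i a) ∂μ‖ := by rw [integral_sub hFi hGi]
    _ ≤ ∫ a, ε * G i a ∂μ := norm_integral_le_of_norm_le (hGi.const_mul ε) hi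
    _ = ε * ∫ a, G i a ∂μ := integral_const_mul ε _
    _ ≤ ε * ‖∫ a, G i a ∂μ‖ := by gcongr; exact le_norm_self _

variable {ι : Type*} {l : Filter ι} {A B : ι → ℝ}

theorem isEquivalent_integral_mul_comp_affine_cos {w f g : ℝ → ℝ} {c : ℝ}
    (hw : Continuous w) (hw0 : ∀ θ, 0 ≤ w θ) (hf : ContinuousOn f (Iio c))
    (hg : ContinuousOn g (Iio c)) (hg0 : ∀ᶠ x in atBot, 0 ≤ g x) (hfg : f ~[atBot] g)
    (hAB : Tendsto (fun i => A i + |B i|) l atBot) :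
    (fun i => ∫ θ in 0..π, w θ * f (A i + B i * cos θ)) ~[l]
      fun i => ∫ θ in 0..π, w θ * g (A i + B i * cos θ) := by
  have hint : ∀ {h : ℝ → ℝ}, ContinuousOn h (Iio c) → ∀ᶠ i in l,
      IntegrableOn (fun θ => w θ * h (A i + B i * cos θ)) (Ioc 0 π) := fun hh => by
    filter_upwards [hAB.eventually_lt_atBot c] with i hi
    exact (hw.mul (hh.comp_continuous (by fun_prop) fun θ =>
      (mapsTo_add_mul_Icc_abs _ _ (cos_mem_Icc θ)).2.trans_lt hi)).integrableOn_Ioc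
  simp only [intervalIntegral.integral_of_le pi_pos.le]
  refine isEquivalent_integral_of_norm_sub_le (hint hf) (hint hg) fun ε hε => ?_
  obtain ⟨X, hX⟩ := eventually_atBot.1 ((isLittleO_iff.1 hfg hε).and hg0)
  filter_upwards [hAB.eventually_le_atBot X] with i hi
  refine .of_forall fun θ => ?_
  obtain ⟨hle, hpos⟩ := hX _ ((mapsTo_add_mul_Icc_abs _ _ (cos_mem_Icc θ)).2.trans hi)
  rw [norm_of_nonneg hpos] at hle
  rw [← mul_sub, norm_mul, norm_of_nonneg (hw0 θ), mul_left_comm]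
  exact mul_le_mul_of_nonneg_left hle (hw0 θ)

theorem isEquivalent_integral_cos_mul_comp_affine_cos (n : ℕ) {Φ Ψ : ℕ → ℝ → ℝ} {c : ℝ}
    (hΦ : ∀ k ≤ n, ∀ x < c, HasDerivAt (Φ k) (Φ (k + 1) x) x)
    (hΨ : ∀ k ≤ n, ∀ x < c, HasDerivAt (Ψ k) (Ψ (k + 1) x) x)
    (hΨ0 : ∀ᶠ x in atBot, 0 ≤ Ψ n x) (hΦΨ : Φ n ~[atBot] Ψ n)
    (hAB : Tendsto (fun i => A i + |B i|) l atBot) :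
    (fun i => ∫ θ in 0..π, cos (n * θ) * Φ 0 (A i + B i * cos θ)) ~[l]
      fun i => ∫ θ in 0..π, cos (n * θ) * Ψ 0 (A i + B i * cos θ) := by
  have hcont : ∀ {Ξ : ℕ → ℝ → ℝ}, (∀ k ≤ n, ∀ x < c, HasDerivAt (Ξ k) (Ξ (k + 1) x) x) →
      ContinuousOn (Ξ n) (Iio c) := fun hΞ x hx =>
    (hΞ n le_rfl x hx).continuousAt.continuousWithinAt
  have hjacobi : ∀ {Ξ : ℕ → ℝ → ℝ}, (∀ k ≤ n, ∀ x < c, HasDerivAt (Ξ k) (Ξ (k + 1) x) x) →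
      ∀ᶠ i in l, B i ^ n * (∏ j ∈ Finset.range n, (2 * j + 1 : ℝ))⁻¹ *
        (∫ θ in 0..π, sin θ ^ (2 * n) * Ξ n (A i + B i * cos θ)) =
          ∫ θ in 0..π, cos (n * θ) * Ξ 0 (A i + B i * cos θ) := fun hΞ => by
    filter_upwards [hAB.eventually_lt_atBot c] with i hi
    exact (integral_cos_mul_comp_affine_cos n
      (fun k hk x hx => hΞ k hk.le x (hx.2.trans_lt hi))
      ((hcont hΞ).mono fun x hx => hx.2.trans_lt hi)).symm
  have hweighted := isEquivalent_integral_mul_comp_affine_cos (w := fun θ => sin θ ^ (2 * n))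
    (by fun_prop) (fun θ => (even_two_mul n).pow_nonneg _) (hcont hΦ) (hcont hΨ) hΨ0 hΦΨ hAB
  exact ((IsEquivalent.refl.mul hweighted).congr_left (hjacobi hΦ)).congr_right (hjacobi hΨ)

end Asymptotics

section FermiSeries

open Real Asymptotics Topology

/-- The series `∑_{m ≥ 1} (-1)^(m-1) e^(mx) / m^s`, that is `-Li_s (-e^x)`, indexed by `m - 1`. It
converges for `x < 0` at every real order `s`, so that it makes sense of the derivatives
`φ_s⁽ᵏ⁾ = φ_{s-k}` of the Fermi integral even when `s ≤ k`; elsewhere a divergent sum is `0`. -/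
noncomputable def fermiSeries (s x : ℝ) : ℝ :=
  ∑' m : ℕ, (-1) ^ m * exp ((m + 1) * x) / (m + 1) ^ s

theorem norm_neg_one_pow_mul_exp_div_rpow (s x : ℝ) (m : ℕ) :
    ‖(-1 : ℝ) ^ m * exp ((m + 1) * x) / (m + 1) ^ s‖ = exp ((m + 1) * x) / (m + 1) ^ s := by
  have : (0 : ℝ) ≤ (m + 1) ^ s := by positivity
  simp [abs_of_nonneg this]

theorem summable_exp_mul_div_rpow (s : ℝ) {x : ℝ} (hx : x < 0) :
    Summable fun m : ℕ => exp ((m + 1) * x) / (m + 1 : ℝ) ^ s := by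
  have hdecay : (fun t : ℝ => exp (t * x) / t ^ s) =O[atTop] fun t => t ^ (-2 : ℝ) := by
    have := (isLittleO_exp_neg_mul_rpow_atTop (neg_pos.2 hx) (s - 2)).isBigO.mul
      (isBigO_refl (fun t : ℝ => t ^ (-s)) atTop)
    refine this.congr' ?_ ?_
    · filter_upwards [eventually_ge_atTop 0] with t ht
      rw [rpow_neg ht, neg_neg, mul_comm x, div_eq_mul_inv]
    · filter_upwards [eventually_gt_atTop 0] with t ht
      rw [← rpow_add ht]
      ring_nf
  have := summable_of_isBigO_nat (summable_nat_rpow.2 (by norm_num))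
    (hdecay.comp_tendsto tendsto_natCast_atTop_atTop)
  exact_mod_cast (summable_nat_add_iff 1).2 this

theorem summable_fermiSeries (s : ℝ) {x : ℝ} (hx : x < 0) :
    Summable fun m : ℕ => (-1) ^ m * exp ((m + 1) * x) / (m + 1 : ℝ) ^ s :=
  .of_norm <| by simpa only [norm_neg_one_pow_mul_exp_div_rpow] using summable_exp_mul_div_rpow s hx

theorem hasDerivAt_fermiSeries (s : ℝ) {x : ℝ} (hx : x < 0) :
    HasDerivAt (fermiSeries s) (fermiSeries (s - 1) x) x := by
  have hterm : ∀ (m : ℕ) (y : ℝ), HasDerivAt (fun y => (-1) ^ m * exp ((m + 1) * y) / (m + 1) ^ s)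
      ((-1) ^ m * exp ((m + 1) * y) / (m + 1) ^ (s - 1)) y := fun m y => by
    convert! (((hasDerivAt_const_mul (m + 1 : ℝ)).exp).const_mul ((-1) ^ m)).div_const
      ((m + 1 : ℝ) ^ s) using 1
    rw [rpow_sub_one (by positivity)]
    field_simp
  have hbound : ∀ (m : ℕ) (y : ℝ), y ∈ Iio (x / 2) →
      ‖(-1 : ℝ) ^ m * exp ((m + 1) * y) / (m + 1) ^ (s - 1)‖ ≤
        exp ((m + 1) * (x / 2)) / (m + 1) ^ (s - 1) := fun m y hy => by
    rw [norm_neg_one_pow_mul_exp_div_rpow]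
    have : y ≤ x / 2 := le_of_lt hy
    gcongr
  have hmem : x ∈ Iio (x / 2) := by rw [mem_Iio]; linarith
  exact hasDerivAt_tsum_of_isPreconnected (summable_exp_mul_div_rpow (s - 1) (by linarith))
    isOpen_Iio isPreconnected_Iio (fun m y _ => hterm m y) hbound hmem
    (summable_fermiSeries s hx) hmem

theorem fermiSeries_isEquivalent_exp (s : ℝ) : fermiSeries s ~[atBot] exp := by
  have hratio : ∀ m : ℕ, ∀ x, (-1) ^ m * exp ((m + 1) * x) / (m + 1 : ℝ) ^ s / exp x =
      (-1) ^ m / (m + 1 : ℝ) ^ s * exp (m * x) := fun m x => by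
    rw [add_one_mul, exp_add]
    field_simp
  have hterm : ∀ m : ℕ, Tendsto (fun x => (-1) ^ m / (m + 1 : ℝ) ^ s * exp (m * x)) atBot
      (𝓝 (if m = 0 then 1 else 0)) := fun m => by
    split_ifs with hm
    · simp [hm]
    · have := tendsto_exp_atBot.comp
        (tendsto_id.const_mul_atBot (Nat.cast_pos.2 (Nat.pos_of_ne_zero hm) : (0 : ℝ) < m))
      simpa using this.const_mul ((-1) ^ m / (m + 1 : ℝ) ^ s)
  have hsummable := (summable_exp_mul_div_rpow s neg_one_lt_zero).mul_left (exp 1)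
  have hlim := tendsto_tsum_of_dominated_convergence hsummable hterm <| by
    filter_upwards [eventually_le_atBot (-1)] with x hx m
    rw [← hratio, norm_div, norm_neg_one_pow_mul_exp_div_rpow, norm_of_nonneg (exp_pos x).le,
      div_right_comm, ← exp_sub, ← mul_div_assoc, ← exp_add]
    gcongr
    nlinarith [m.cast_nonneg (α := ℝ)]
  refine isEquivalent_of_tendsto_one ?_
  simpa only [fermiSeries, Pi.div_def, ← tsum_div_const, hratio, tsum_ite_eq] using hlim

theorem hasSum_neg_one_pow_mul_exp {y : ℝ} (hy : y < 0) :
    HasSum (fun m : ℕ => (-1) ^ m * exp ((m + 1) * y)) (1 / (exp (-y) + 1)) := by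
  have hgeom := (hasSum_geometric_of_abs_lt_one (r := -exp y) (by simpa using hy)).mul_left (exp y)
  convert! hgeom using 1
  · ext m
    rw [add_one_mul, exp_add, exp_nat_mul, neg_pow]
    ring
  · rw [exp_neg, sub_neg_eq_add]
    have := exp_pos y
    field_simp

theorem mellin_ofReal (f : ℝ → ℝ) (s : ℝ) :
    mellin (fun t => (f t : ℂ)) s = ((∫ t in Ioi 0, t ^ (s - 1) * f t : ℝ) : ℂ) := by
  rw [mellin, ← integral_complex_ofReal]
  refine setIntegral_congr_fun measurableSet_Ioi fun t ht => ?_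
  simp [Complex.ofReal_cpow (le_of_lt ht)]

theorem hasSum_integral_fermi {s x : ℝ} (hs : 0 < s) (hx : x < 0) :
    HasSum (fun m : ℕ => Gamma s * ((-1) ^ m * exp ((m + 1) * x) / (m + 1) ^ s))
      (∫ t in Ioi 0, t ^ (s - 1) / (exp (t - x) + 1)) := by
  have hmellin := hasSum_mellin (a := fun m : ℕ => (((-1) ^ m * exp ((m + 1) * x) : ℝ) : ℂ))
    (p := fun m => (m + 1 : ℝ)) (F := fun t => ((1 / (exp (t - x) + 1) : ℝ) : ℂ)) (s := s)
    (fun m => .inr (by positivity)) (by simpa using hs)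
    (fun t ht => by
      have := hasSum_neg_one_pow_mul_exp (y := x - t) (by linarith [mem_Ioi.1 ht])
      rw [neg_sub] at this
      convert! Complex.hasSum_ofReal.2 this using 2 with m
      rw [← Complex.ofReal_mul, mul_assoc, ← exp_add]
      ring_nf)
    (by simpa only [Complex.norm_real, Complex.ofReal_re, norm_mul, norm_pow, norm_neg, norm_one,
      one_pow, one_mul, norm_of_nonneg (exp_pos _).le] using summable_exp_mul_div_rpow s hx)
  rw [mellin_ofReal] at hmellin
  simp only [mul_one_div] at hmellin
  refine Complex.hasSum_ofReal.1 (hmellin.congr_fun fun m => ?_)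
  rw [Complex.Gamma_ofReal, ← Complex.ofReal_cpow (by positivity)]
  push_cast
  ring

theorem fermi_eq_fermiSeries {s x : ℝ} (hs : 0 < s) (hx : x < 0) :
    fermi s x = fermiSeries s x := by
  rw [fermi, ← (hasSum_integral_fermi hs hx).tsum_eq, tsum_mul_left, ← mul_assoc,
    one_div_mul_cancel (Gamma_pos_of_pos hs).ne', one_mul, fermiSeries]

end FermiSeries

section MaxwellBoltzmann

open Real Asymptotics

theorem besselI_eq_integral_sin_pow (N : ℕ) (B : ℝ) :
    besselI N B = 1 / π * (B ^ N * (∏ j ∈ Finset.range N, (2 * j + 1 : ℝ))⁻¹ *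
      ∫ θ in 0..π, sin θ ^ (2 * N) * exp (B * cos θ)) := by
  have := integral_cos_mul_comp_affine_cos N (A := 0) (B := B) (Φ := fun _ => exp)
    (fun _ _ x _ => hasDerivAt_exp x) continuous_exp.continuousOn
  simp only [zero_add] at this
  rw [besselI, this]

theorem besselI_ne_zero (N : ℕ) {B : ℝ} (hB : B ≠ 0) : besselI N B ≠ 0 := by
  have hpos : 0 < ∫ θ in 0..π, sin θ ^ (2 * N) * exp (B * cos θ) :=
    intervalIntegral.intervalIntegral_pos_of_pos_on
      (Continuous.intervalIntegrable (by fun_prop) _ _)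
      (fun θ hθ => by have := sin_pos_of_mem_Ioo hθ; positivity) pi_pos
  rw [besselI_eq_integral_sin_pow]
  positivity

theorem exp_mul_besselI (N : ℕ) (A B : ℝ) :
    exp A * besselI N B =
      1 / π * ∫ θ in 0..π, cos (N * θ) * exp (A + B * cos θ) := by
  rw [besselI, mul_left_comm, ← intervalIntegral.integral_const_mul]
  simp only [exp_add, mul_left_comm]

theorem calI_eq_integral_fermiSeries (N : ℕ) {s A B : ℝ} (hs : 0 < s) (hAB : A + |B| < 0) :
    calI N s A B =
      1 / π * ∫ θ in 0..π, cos (N * θ) * fermiSeries s (A + B * cos θ) := by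
  have hneg : ∀ θ, A + B * cos θ < 0 := fun θ =>
    (mapsTo_add_mul_Icc_abs A B (cos_mem_Icc θ)).2.trans_lt hAB
  simp only [calI, fermi_eq_fermiSeries hs (hneg _)]

theorem calI_asymptotic_maxwell_boltzmann_general {ι : Type*} {l : Filter ι} {s : ℝ} (hs : 0 < s)
    (N : ℕ) {A B : ι → ℝ} (hAB : Tendsto (fun i => A i + |B i|) l atBot) :
    (fun i => calI N s (A i) (B i)) ~[l] fun i => exp (A i) * besselI N (B i) := by
  have hint := isEquivalent_integral_cos_mul_comp_affine_cos N (c := 0)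
    (Φ := fun k => fermiSeries (s - k)) (Ψ := fun _ => exp)
    (fun k _ x hx => by simpa [sub_sub] using hasDerivAt_fermiSeries (s - k) hx)
    (fun _ _ x _ => hasDerivAt_exp x) (.of_forall fun x => (exp_pos x).le)
    (fermiSeries_isEquivalent_exp (s - N)) hAB
  simp only [Nat.cast_zero, sub_zero] at hint
  simp only [exp_mul_besselI]
  refine (IsEquivalent.refl.mul hint).congr_left ?_
  filter_upwards [hAB.eventually_lt_atBot 0] with i hi
  exact (calI_eq_integral_fermiSeries N hs hi).symm

end MaxwellBoltzmann

/-- As `A_k + B_k → -∞` (with `B_k > 0`), `𝓘_N^s(A_k,B_k) ∼ e^{A_k} I_N(B_k)`. -/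
theorem calI_asymptotic_maxwell_boltzmann (s : ℝ) (hs : 0 < s) (N : ℕ) (A B : ℕ → ℝ)
    (hB : ∀ k, 0 < B k)
    (hAB : Tendsto (fun k => A k + B k) atTop atBot) :
    Tendsto (fun k => calI N s (A k) (B k) / (Real.exp (A k) * besselI N (B k)))
      atTop (nhds 1) := by
  have hequiv := calI_asymptotic_maxwell_boltzmann_general hs N (A := A) (B := B) <| by
    simpa only [abs_of_pos (hB _)] using hAB
  exact (Asymptotics.isEquivalent_iff_tendsto_one <| .of_forall fun k =>
    mul_ne_zero (Real.exp_ne_zero _) (besselI_ne_zero N (hB k).ne')).1 hequiv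
end

section
/- For every A ∈ ℝ and every b ∈ ℝ² with b ≠ 0: ∫_{ℝ²} ( e^{|p| − b·p/|p| − A} + 1 )^{−1} dp = 2 ∫₀^π φ₂(A + |b| cos θ) dθ, and ∫_{ℝ²} (p/|p|) ( e^{|p| − b·p/|p| − A} + 1 )^{−1} dp = (b/|b|) · 2 ∫₀^π cos θ · φ₂(A + |b| cos θ) dθ. -/
open MeasureTheory Set

/-- The Euclidean norm on `ℝ²`. -/
noncomputable def nrm (p : ℝ × ℝ) : ℝ := Real.sqrt (p.1 ^ 2 + p.2 ^ 2)

/-!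
The exponent `|p| - b·p/|p| - A` is the radius minus a function of the direction alone. In polar
coordinates the radial integral is therefore a Fermi integral, evaluated at `A + |b| cos (θ - α)`
where `α` is the angle of `b`. This is even in `θ - α`, so folding the circle at `α` leaves the even
part of the angular weight: `2`, `2 cos α cos θ` and `2 sin α cos θ` for the weights `1`, `cos` and
`sin`.
-/

section

open Real

section FermiIntegral

variable {Ω : Type*} [MeasurableSpace Ω] {μ : Measure Ω} {s M : ℝ} {c x : Ω → ℝ}

lemma Gamma_mul_fermi (hs : 0 < s) (y : ℝ) :
    Gamma s * fermi s y = ∫ t in Ioi (0 : ℝ), t ^ (s - 1) / (exp (t - y) + 1) := by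
  rw [fermi, one_div, mul_inv_cancel_left₀ (Gamma_pos_of_pos hs).ne']

lemma rpow_div_exp_sub_add_one_le {t y : ℝ} (ht : 0 ≤ t) (hy : y ≤ M) :
    t ^ (s - 1) / (exp (t - y) + 1) ≤ exp (-t) * t ^ (s - 1) * exp M :=
  calc t ^ (s - 1) / (exp (t - y) + 1)
      ≤ t ^ (s - 1) / exp (t - M) := by gcongr; linarith [exp_le_exp.mpr (sub_le_sub_left hy t)]
    _ = exp (-t) * t ^ (s - 1) * exp M := by rw [exp_sub, exp_neg]; field_simp

lemma integrable_fermi_integrand (hs : 0 < s) (hc : Integrable c μ) (hx : AEMeasurable x μ)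
    (hM : ∀ᵐ ω ∂μ, x ω ≤ M) :
    Integrable (fun q : ℝ × Ω ↦ c q.2 * (q.1 ^ (s - 1) / (exp (q.1 - x q.2) + 1)))
      ((volume.restrict (Ioi 0)).prod μ) := by
  have hdom := (GammaIntegral_convergent hs).mul_prod (hc.norm.const_mul (exp M))
  refine hdom.mono' ?_ ?_
  · have hx' := hx.comp_quasiMeasurePreserving
      (Measure.quasiMeasurePreserving_snd (μ := volume.restrict (Ioi (0 : ℝ))))
    have hkernel : AEMeasurable (fun q : ℝ × Ω ↦ q.1 ^ (s - 1) / (exp (q.1 - x q.2) + 1))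
        ((volume.restrict (Ioi 0)).prod μ) :=
      (measurable_fst.pow_const _).aemeasurable.div
        ((measurable_fst.aemeasurable.sub hx').exp.add_const 1)
    exact hc.aestronglyMeasurable.comp_snd.mul hkernel.aestronglyMeasurable
  · filter_upwards [Measure.quasiMeasurePreserving_fst.ae (ae_restrict_mem measurableSet_Ioi),
      Measure.quasiMeasurePreserving_snd.ae hM] with q (hr : 0 < q.1) hq
    have hkernel_nonneg : 0 ≤ q.1 ^ (s - 1) / (exp (q.1 - x q.2) + 1) := by positivity
    rw [norm_mul, norm_of_nonneg hkernel_nonneg]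
    calc ‖c q.2‖ * (q.1 ^ (s - 1) / (exp (q.1 - x q.2) + 1))
        ≤ ‖c q.2‖ * (exp (-q.1) * q.1 ^ (s - 1) * exp M) := by
          gcongr; exact rpow_div_exp_sub_add_one_le hr.le hq
      _ = exp (-q.1) * q.1 ^ (s - 1) * (exp M * ‖c q.2‖) := by ring

lemma integrable_mul_fermi [SFinite μ] (hs : 0 < s) (hc : Integrable c μ)
    (hx : AEMeasurable x μ) (hM : ∀ᵐ ω ∂μ, x ω ≤ M) :
    Integrable (fun ω ↦ c ω * fermi s (x ω)) μ := by
  have h := (integrable_fermi_integrand hs hc hx hM).integral_prod_right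
  simp only [integral_const_mul, ← Gamma_mul_fermi hs, mul_left_comm _ (Gamma s)] at h
  exact (integrable_const_mul_iff (Gamma_pos_of_pos hs).ne'.isUnit _).mp h

lemma integral_fermi_integrand_prod [SFinite μ] (hs : 0 < s) (hc : Integrable c μ)
    (hx : AEMeasurable x μ) (hM : ∀ᵐ ω ∂μ, x ω ≤ M) :
    ∫ q : ℝ × Ω, c q.2 * (q.1 ^ (s - 1) / (exp (q.1 - x q.2) + 1))
        ∂(volume.restrict (Ioi 0)).prod μ =
      Gamma s * ∫ ω, c ω * fermi s (x ω) ∂μ := by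
  rw [integral_prod_symm _ (integrable_fermi_integrand hs hc hx hM)]
  simp only [integral_const_mul, ← Gamma_mul_fermi hs, mul_left_comm _ (Gamma s)]

end FermiIntegral

section PolarCoordinates

/-- The unit vector `p / |p|`, through which all angular weights are expressed; division by zero
gives it the value `0` at the origin. -/
noncomputable def direction (p : ℝ × ℝ) : ℝ × ℝ := (p.1 / nrm p, p.2 / nrm p)

lemma nrm_polarCoord_symm {q : ℝ × ℝ} (hq : 0 ≤ q.1) : nrm (polarCoord.symm q) = q.1 := by
  rw [nrm, polarCoord_symm_apply, mul_pow, mul_pow, ← mul_add, cos_sq_add_sin_sq, mul_one,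
    sqrt_sq hq]

lemma direction_polarCoord_symm {q : ℝ × ℝ} (hq : 0 < q.1) :
    direction (polarCoord.symm q) = (cos q.2, sin q.2) := by
  rw [direction, nrm_polarCoord_symm hq.le, polarCoord_symm_apply,
    mul_div_cancel_left₀ _ hq.ne', mul_div_cancel_left₀ _ hq.ne']

lemma exists_eq_nrm_mul_cos_sin (b : ℝ × ℝ) : ∃ α, b = (nrm b * cos α, nrm b * sin α) := by
  have hnorm : ‖(⟨b.1, b.2⟩ : ℂ)‖ = nrm b := Complex.norm_eq_sqrt_sq_add_sq _
  rw [← hnorm]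
  exact ⟨Complex.arg ⟨b.1, b.2⟩, by rw [Complex.norm_mul_cos_arg, Complex.norm_mul_sin_arg]⟩

lemma integral_rpow_nrm_mul_direction {s M : ℝ} (hs : 0 < s) {c x : ℝ × ℝ → ℝ}
    (hc : IntervalIntegrable (fun θ ↦ c (cos θ, sin θ)) volume (-π) π)
    (hx : Measurable fun θ ↦ x (cos θ, sin θ)) (hM : ∀ θ, x (cos θ, sin θ) ≤ M) :
    ∫ p, nrm p ^ (s - 2) * (c (direction p) * (exp (nrm p - x (direction p)) + 1)⁻¹) =
      Gamma s * ∫ θ in (-π)..π, c (cos θ, sin θ) * fermi s (x (cos θ, sin θ)) := by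
  have hπ : -π ≤ π := by linarith [pi_pos]
  rw [intervalIntegrable_iff_integrableOn_Ioo_of_le hπ] at hc
  rw [intervalIntegral.integral_of_le hπ, integral_Ioc_eq_integral_Ioo,
    ← integral_fermi_integrand_prod hs hc hx.aemeasurable (.of_forall hM),
    ← integral_comp_polarCoord_symm, Measure.prod_restrict, ← Measure.volume_eq_prod]
  refine setIntegral_congr_fun (measurableSet_Ioi.prod measurableSet_Ioo) ?_
  rintro q ⟨hr : 0 < q.1, -⟩
  have hpow : q.1 ^ (s - 1) = q.1 * q.1 ^ (s - 2) := by
    rw [show s - 1 = s - 2 + 1 by ring, rpow_add_one hr.ne', mul_comm]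
  simp only [nrm_polarCoord_symm hr.le, direction_polarCoord_symm hr, smul_eq_mul, hpow]
  ring

end PolarCoordinates

lemma integral_eq_integral_add_reflect_of_periodic {E : Type*} [NormedAddCommGroup E]
    [NormedSpace ℝ E] {f : ℝ → E} {T : ℝ} (hT : T ≠ 0) (hf : Function.Periodic f (2 * T))
    (hfi : IntervalIntegrable f volume (-T) T) (α : ℝ) :
    ∫ t in (-T)..T, f t = ∫ t in (0)..T, (f (α + t) + f (α - t)) := by
  have hint (a b : ℝ) : IntervalIntegrable f volume a b :=
    hf.intervalIntegrable (t := -T) (by simpa) (by convert hfi using 1; ring) a b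
  have hright : IntervalIntegrable (fun t ↦ f (α + t)) volume 0 T := by
    simpa using (hint α (α + T)).comp_add_left α
  have hleft : IntervalIntegrable (fun t ↦ f (α - t)) volume 0 T := by
    simpa using (hint α (α - T)).comp_sub_left α
  calc ∫ t in (-T)..T, f t = ∫ t in (α - T)..(α + T), f t := by
        convert hf.intervalIntegral_add_eq (-T) (α - T) using 2 <;> ring
    _ = (∫ t in (α - T)..α, f t) + ∫ t in α..(α + T), f t :=
        (intervalIntegral.integral_add_adjacent_intervals (hint _ _) (hint _ _)).symm
    _ = ∫ t in (0)..T, (f (α + t) + f (α - t)) := by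
        rw [intervalIntegral.integral_add hright hleft, intervalIntegral.integral_comp_add_left,
          intervalIntegral.integral_comp_sub_left, add_zero, sub_zero, add_comm]

section Equilibrium

/-- The Fermi-Dirac equilibrium `(e^{|p| - b·p/|p| - A} + 1)⁻¹`, the density whose moments are
computed; at `p = 0` the term `b·p/|p|` is `0`. -/
noncomputable def equilibrium (A : ℝ) (b p : ℝ × ℝ) : ℝ :=
  (exp (nrm p - (b.1 * p.1 + b.2 * p.2) / nrm p - A) + 1)⁻¹

lemma equilibrium_eq_direction (A : ℝ) (b p : ℝ × ℝ) :
    equilibrium A b p =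
      (exp (nrm p - (A + (b.1 * (direction p).1 + b.2 * (direction p).2))) + 1)⁻¹ := by
  rw [equilibrium, direction]
  ring_nf

variable {s : ℝ} {c : ℝ × ℝ → ℝ}

lemma integral_rpow_nrm_mul_equilibrium (hs : 0 < s) (A B α : ℝ)
    (hc : IntervalIntegrable (fun θ ↦ c (cos θ, sin θ)) volume (-π) π) :
    ∫ p, nrm p ^ (s - 2) * (c (direction p) * equilibrium A (B * cos α, B * sin α) p) =
      Gamma s * ∫ θ in (0)..π,
        (c (cos (α + θ), sin (α + θ)) + c (cos (α - θ), sin (α - θ))) *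
          fermi s (A + B * cos θ) := by
  have hinner (θ : ℝ) : B * cos α * cos θ + B * sin α * sin θ = B * cos (α - θ) := by
    rw [cos_sub]; ring
  have hbound (θ : ℝ) : A + B * cos (α - θ) ≤ A + |B| := by
    have : |B * cos (α - θ)| ≤ |B| := by
      rw [abs_mul]
      exact mul_le_of_le_one_right (abs_nonneg B) (abs_cos_le_one _)
    linarith [le_abs_self (B * cos (α - θ))]
  have hint : IntervalIntegrable (fun θ ↦ c (cos θ, sin θ) * fermi s (A + B * cos (α - θ)))
      volume (-π) π := by
    have hπ : -π ≤ π := by linarith [pi_pos]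
    rw [intervalIntegrable_iff_integrableOn_Ioc_of_le hπ] at hc ⊢
    exact integrable_mul_fermi hs hc (by fun_prop) (.of_forall hbound)
  have hper : Function.Periodic (fun θ ↦ c (cos θ, sin θ) * fermi s (A + B * cos (α - θ)))
      (2 * π) := fun θ ↦ by
    simp only [cos_add_two_pi, sin_add_two_pi, ← sub_sub, cos_sub_two_pi]
  simp only [equilibrium_eq_direction]
  rw [integral_rpow_nrm_mul_direction (c := c)
    (x := fun u ↦ A + (B * cos α * u.1 + B * sin α * u.2)) hs hc (by fun_prop)
    (fun θ ↦ (hinner θ).symm ▸ hbound θ)]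
  simp only [hinner]
  rw [integral_eq_integral_add_reflect_of_periodic pi_ne_zero hper hint α]
  simp only [sub_add_cancel_left, sub_sub_cancel, cos_neg, ← add_mul]

lemma integral_direction_mul_equilibrium (A B α : ℝ)
    (hc : IntervalIntegrable (fun θ ↦ c (cos θ, sin θ)) volume (-π) π) {k : ℝ} {e : ℝ → ℝ}
    (hce : ∀ θ, c (cos (α + θ), sin (α + θ)) + c (cos (α - θ), sin (α - θ)) = k * e θ) :
    ∫ p, c (direction p) * equilibrium A (B * cos α, B * sin α) p =
      k * ∫ θ in (0)..π, e θ * fermi 2 (A + B * cos θ) := by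
  simpa only [sub_self, rpow_zero, one_mul, Gamma_two, hce, mul_assoc,
    intervalIntegral.integral_const_mul] using
    integral_rpow_nrm_mul_equilibrium two_pos A B α hc

end Equilibrium

end

/-- Reduction of the moments of the Fermi-Dirac equilibrium to Fermi integrals:
`∫_{ℝ²} (e^{|p|-b·p/|p|-A}+1)^{-1} dp = 2∫₀^π φ₂(A+|b|cosθ)dθ` and
`∫_{ℝ²} (p/|p|)(e^{|p|-b·p/|p|-A}+1)^{-1} dp = (b/|b|)·2∫₀^π cosθ φ₂(A+|b|cosθ)dθ`. -/
theorem equilibrium_moments (A : ℝ) (b : ℝ × ℝ) (hb : b ≠ 0) :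
    (∫ p : ℝ × ℝ,
        (Real.exp (nrm p - (b.1 * p.1 + b.2 * p.2) / nrm p - A) + 1)⁻¹)
      = 2 * ∫ θ in (0 : ℝ)..Real.pi, fermi 2 (A + nrm b * Real.cos θ) ∧
    (∫ p : ℝ × ℝ, (p.1 / nrm p) *
        (Real.exp (nrm p - (b.1 * p.1 + b.2 * p.2) / nrm p - A) + 1)⁻¹)
      = (b.1 / nrm b) *
          (2 * ∫ θ in (0 : ℝ)..Real.pi, Real.cos θ * fermi 2 (A + nrm b * Real.cos θ)) ∧
    (∫ p : ℝ × ℝ, (p.2 / nrm p) *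
        (Real.exp (nrm p - (b.1 * p.1 + b.2 * p.2) / nrm p - A) + 1)⁻¹)
      = (b.2 / nrm b) *
          (2 * ∫ θ in (0 : ℝ)..Real.pi, Real.cos θ * fermi 2 (A + nrm b * Real.cos θ)) := by
  obtain ⟨α, hα⟩ := exists_eq_nrm_mul_cos_sin b
  have hB : nrm b ≠ 0 := fun h ↦ hb (by simpa [h, ← Prod.zero_eq_mk] using hα)
  have hcos : b.1 / nrm b = Real.cos α := by
    rw [congrArg Prod.fst hα, mul_div_cancel_left₀ _ hB]
  have hsin : b.2 / nrm b = Real.sin α := by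
    rw [congrArg Prod.snd hα, mul_div_cancel_left₀ _ hB]
  have moment {c : ℝ × ℝ → ℝ} (hc : Continuous c) {k : ℝ} {e : ℝ → ℝ}
      (hce : ∀ θ, c (Real.cos (α + θ), Real.sin (α + θ)) +
        c (Real.cos (α - θ), Real.sin (α - θ)) = k * e θ) :
      ∫ p, c (direction p) * equilibrium A b p =
        k * ∫ θ in (0 : ℝ)..Real.pi, e θ * fermi 2 (A + nrm b * Real.cos θ) := by
    have hci : Continuous fun θ ↦ c (Real.cos θ, Real.sin θ) := by fun_prop
    simpa only [← hα] using
      integral_direction_mul_equilibrium A (nrm b) α (hci.intervalIntegrable _ _) hce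
  rw [hcos, hsin, ← mul_assoc, ← mul_assoc]
  refine ⟨?_, moment continuous_fst fun θ ↦ ?_, moment continuous_snd fun θ ↦ ?_⟩
  · simpa only [one_mul, equilibrium] using
      moment (c := fun _ ↦ 1) (e := fun _ ↦ 1) continuous_const fun _ ↦ by norm_num
  · rw [Real.cos_add, Real.cos_sub]; ring
  · rw [Real.sin_add, Real.sin_sub]; ring
end

section
/- For ψ ∈ (π/4, 3π/4) set C = C(ψ) = arccos(−cot ψ), so that C → 0⁺ as ψ → (3π/4)⁻. Then, as ψ → (3π/4)⁻: 𝓕₁²(ψ)/𝓕₀²(ψ) = 1 − C²/14 + O(C⁴); ( 𝓕₀²(ψ) + 𝓕₂²(ψ) ) / ( 2 𝓕₀²(ψ) ) = 1 − C²/7 + O(C⁴); ( 𝓕₀¹(ψ) + 𝓕₂¹(ψ) ) / ( 2 √(2 𝓕₀²(ψ)) ) = (√5/√(6π)) C^{1/2} + O(C^{5/2}); and ( 𝓕₀¹(ψ) − 𝓕₂¹(ψ) ) / ( 2 √(2 𝓕₀²(ψ)) ) = (1/√(30π)) C^{5/2} + O(C^{9/2}). -/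
open MeasureTheory Set Filter Asymptotics

/-- `C(ψ) = π` for `0 ≤ ψ ≤ π/4`, `C(ψ) = arccos(-cot ψ)` for `π/4 < ψ < 3π/4`. -/
noncomputable def Cpsi (ψ : ℝ) : ℝ :=
  if ψ ≤ Real.pi / 4 then Real.pi else Real.arccos (-(Real.cos ψ / Real.sin ψ))

/-- `𝓕_N^s(ψ) = (1/(πΓ(s+1))) ∫₀^{C(ψ)} cos(Nθ)(cos ψ + sin ψ cos θ)^s dθ`. -/
noncomputable def calF (N : ℕ) (s ψ : ℝ) : ℝ :=
  (1 / (Real.pi * Real.Gamma (s + 1))) *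
    ∫ θ in (0 : ℝ)..Cpsi ψ, Real.cos (N * θ) * (Real.cos ψ + Real.sin ψ * Real.cos θ) ^ s

/-- `u(ψ) = 𝓕₁²(ψ)/𝓕₀²(ψ)`. -/
noncomputable def uFun (ψ : ℝ) : ℝ := calF 1 2 ψ / calF 0 2 ψ

/-- `Y(ψ) = (𝓕₀²(ψ)+𝓕₂²(ψ))/(2𝓕₀²(ψ))`. -/
noncomputable def Yfun (ψ : ℝ) : ℝ := (calF 0 2 ψ + calF 2 2 ψ) / (2 * calF 0 2 ψ)

/-- `Z(ψ) = (𝓕₀¹(ψ)-𝓕₂¹(ψ))/(2√(2𝓕₀²(ψ)))`. -/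
noncomputable def Zfun (ψ : ℝ) : ℝ :=
  (calF 0 1 ψ - calF 2 1 ψ) / (2 * Real.sqrt (2 * calF 0 2 ψ))

/-- `Z_⊥(ψ) = (𝓕₀¹(ψ)+𝓕₂¹(ψ))/(2√(2𝓕₀²(ψ)))`. -/
noncomputable def Zperp (ψ : ℝ) : ℝ :=
  (calF 0 1 ψ + calF 2 1 ψ) / (2 * Real.sqrt (2 * calF 0 2 ψ))

/-!
Since `cos ψ = -sin ψ cos C` with `C = C(ψ)`, the base of the power in `𝓕_N^m(ψ)` is
`sin ψ (cos θ - cos C)`, and every ratio becomes a ratio of integrals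
`∫₀^C g(θ) (cos θ - cos C)^m dθ`, or of one such integral and the square root of another, with
`g(θ) = 1` or `g(θ) = 1 ± cos (N θ)`; the powers of `sin ψ` cancel. Substituting `θ = C t`, the
expansions `cos (C t) - cos C = C² (1 - t²)/2 + O(C⁴)` and `g(C t) = a (C t)^k + O(C^(k+2))` hold
uniformly in `t ∈ (0, 1]`, so the integral is `a C^(k+2m+1) ∫₀¹ t^k ((1 - t²)/2)^m dt` up to a
relative error `O(C²)`. Such errors survive quotients and square roots. The first two expansions
reach the order `C²` because `1 - 𝓕_N^m/𝓕_0^m` has the weight `1 - cos (N θ)`, which is itself of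
order `θ²`.
-/

section

open Real Topology Interval

theorem isBigO_mul_sub_mul {α R : Type*} [NormedRing R] {l : Filter α} {f₁ f₂ g₁ g₂ : α → R}
    {e : α → ℝ} (hf : (fun x => f₁ x - f₂ x) =O[l] e) (hg : (fun x => g₁ x - g₂ x) =O[l] e)
    (hg₁ : g₁ =O[l] fun _ => (1 : ℝ)) (hf₂ : f₂ =O[l] fun _ => (1 : ℝ)) :
    (fun x => f₁ x * g₁ x - f₂ x * g₂ x) =O[l] e := by
  have h := (hf.mul hg₁).add ((hf₂.mul hg).congr_right fun x => mul_comm _ _)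
  exact h.congr (fun x => by noncomm_ring) fun x => mul_one _

theorem isBigO_intervalIntegral {α E G : Type*} [NormedAddCommGroup E] [NormedSpace ℝ E]
    [Norm G] {l : Filter α} {F : α → ℝ → E} {e : α → G} {a b : ℝ}
    (h : (fun p : α × ℝ => F p.1 p.2) =O[l ×ˢ 𝓟 (Ι a b)] fun p => e p.1) :
    (fun x => ∫ t in a..b, F x t) =O[l] e := by
  obtain ⟨c, hc⟩ := h.bound
  refine .of_bound (c * |b - a|) ?_
  filter_upwards [eventually_prod_principal_iff.1 hc] with x hx
  rw [mul_right_comm]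
  exact intervalIntegral.norm_integral_le_of_norm_le_const hx

/-- `f x = a x ^ r + O(x ^ (r + 2))` as `x → 0⁺`. The gap of `2` between the exponents is
that of functions whose expansions, up to a common factor, run over the even powers of `x`. -/
def HasLeadingTerm (f : ℝ → ℝ) (a r : ℝ) : Prop :=
  (fun x => f x - a * x ^ r) =O[𝓝[>] 0] fun x => x ^ (r + 2)

namespace HasLeadingTerm

variable {f g : ℝ → ℝ} {a b r s : ℝ}

theorem iff_isBigO_div_sub :
    HasLeadingTerm f a r ↔ (fun x => f x / x ^ r - a) =O[𝓝[>] 0] fun x => x ^ 2 := by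
  simp only [HasLeadingTerm, isBigO_iff]
  refine exists_congr fun c => eventually_congr ?_
  filter_upwards [self_mem_nhdsWithin] with x (hx : 0 < x)
  have hxr : 0 < x ^ r := rpow_pos_of_pos hx r
  have hsub : f x - a * x ^ r = (f x / x ^ r - a) * x ^ r := by field_simp
  rw [hsub, rpow_add hx, rpow_two, mul_comm (x ^ r), norm_mul, norm_mul, ← mul_assoc,
    mul_le_mul_iff_left₀ (norm_pos_iff.2 hxr.ne')]

theorem tendsto_div (hf : HasLeadingTerm f a r) :
    Tendsto (fun x => f x / x ^ r) (𝓝[>] 0) (𝓝 a) := by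
  have hsq : Tendsto (fun x : ℝ => x ^ 2) (𝓝[>] 0) (𝓝 0) :=
    tendsto_nhdsWithin_of_tendsto_nhds ((continuous_pow 2).tendsto' 0 0 (by norm_num))
  exact tendsto_sub_nhds_zero_iff.1 ((iff_isBigO_div_sub.1 hf).trans_tendsto hsq)

theorem isBigO_rpow (hf : HasLeadingTerm f a r) : f =O[𝓝[>] 0] fun x => x ^ r := by
  refine isBigO_of_div_tendsto_nhds ?_ a hf.tendsto_div
  filter_upwards [self_mem_nhdsWithin] with x hx hzero
  exact absurd hzero (rpow_pos_of_pos hx r).ne'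

theorem eventually_pos (hf : HasLeadingTerm f a r) (ha : 0 < a) : ∀ᶠ x in 𝓝[>] 0, 0 < f x := by
  filter_upwards [hf.tendsto_div.eventually_const_lt ha, self_mem_nhdsWithin] with x hfx hx
  exact (div_pos_iff_of_pos_right (rpow_pos_of_pos hx r)).1 hfx

theorem div (hf : HasLeadingTerm f a r) (hg : HasLeadingTerm g b s) (hb : b ≠ 0) :
    HasLeadingTerm (fun x => f x / g x) (a / b) (r - s) := by
  have hinv : (fun x => (g x / x ^ s)⁻¹ - b⁻¹) =O[𝓝[>] 0] fun x => x ^ 2 :=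
    ((hasDerivAt_inv hb).isBigO_sub.comp_tendsto hg.tendsto_div).trans
      (iff_isBigO_div_sub.1 hg)
  have hmul := isBigO_mul_sub_mul (iff_isBigO_div_sub.1 hf) hinv
    ((hg.tendsto_div.inv₀ hb).isBigO_one ℝ) (isBigO_const_const a one_ne_zero _)
  refine iff_isBigO_div_sub.2 (hmul.congr' ?_ .rfl)
  filter_upwards [self_mem_nhdsWithin] with x (hx : 0 < x)
  rw [rpow_sub hx, inv_div]
  field_simp

theorem sqrt (hf : HasLeadingTerm f a r) (ha : 0 < a) :
    HasLeadingTerm (fun x => √(f x)) √a (r / 2) := by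
  have hsqrt : (fun x => √(f x / x ^ r) - √a) =O[𝓝[>] 0] fun x => x ^ 2 :=
    ((hasDerivAt_sqrt ha.ne').isBigO_sub.comp_tendsto hf.tendsto_div).trans
      (iff_isBigO_div_sub.1 hf)
  refine iff_isBigO_div_sub.2 (hsqrt.congr' ?_ .rfl)
  filter_upwards [self_mem_nhdsWithin] with x (hx : 0 < x)
  rw [sqrt_div' _ (by positivity), sqrt_eq_rpow (x ^ r), ← rpow_mul hx.le, mul_one_div]

theorem const_mul (c : ℝ) (hf : HasLeadingTerm f a r) :
    HasLeadingTerm (fun x => c * f x) (c * a) r :=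
  (hf.const_mul_left c).congr_left fun x => by ring

theorem natCast_iff {n : ℕ} :
    HasLeadingTerm f a n ↔ (fun x => f x - a * x ^ n) =O[𝓝[>] 0] fun x => x ^ (n + 2) := by
  have hcast : (n : ℝ) + 2 = (n + 2 : ℕ) := by push_cast; rfl
  simp only [HasLeadingTerm, hcast, rpow_natCast]

end HasLeadingTerm

theorem hasLeadingTerm_one : HasLeadingTerm (fun _ => 1) 1 (0 : ℕ) := by
  simp [HasLeadingTerm, isBigO_zero]

theorem isBigO_one_sub_cos_const_mul (c : ℝ) :
    (fun x => 1 - cos (c * x) - c ^ 2 / 2 * x ^ 2) =O[𝓝 0] fun x => x ^ 4 := by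
  have hcos : (fun y => cos y - (1 - y ^ 2 / 2)) =O[𝓝 0] fun y => y ^ 4 := by
    refine .of_bound (5 / 96) ?_
    filter_upwards [Metric.closedBall_mem_nhds (0 : ℝ) one_pos] with y hy
    rw [norm_pow, mul_comm]
    exact cos_bound (mem_closedBall_zero_iff.1 hy)
  have hscale : Tendsto (fun x => c * x) (𝓝 0) (𝓝 0) :=
    (continuous_const_mul c).tendsto' 0 0 (mul_zero c)
  have hpow : (fun x => (c * x) ^ 4) =O[𝓝 0] fun x => x ^ 4 :=
    (isBigO_const_mul_self c _ _).pow 4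
  exact ((hcos.comp_tendsto hscale).trans hpow).neg_left.congr_left fun x => by
    simp only [Function.comp_apply]
    ring

theorem hasLeadingTerm_one_sub_cos (c : ℝ) :
    HasLeadingTerm (fun x => 1 - cos (c * x)) (c ^ 2 / 2) (2 : ℕ) :=
  HasLeadingTerm.natCast_iff.2 ((isBigO_one_sub_cos_const_mul c).mono nhdsWithin_le_nhds)

theorem hasLeadingTerm_one_add_cos (c : ℝ) :
    HasLeadingTerm (fun x => 1 + cos (c * x)) 2 (0 : ℕ) := by
  have h : (fun x => 1 - cos (c * x)) =O[𝓝[>] 0] fun x => x ^ 2 := by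
    simpa using (hasLeadingTerm_one_sub_cos c).isBigO_rpow
  refine HasLeadingTerm.iff_isBigO_div_sub.2 (h.neg_left.congr_left fun x => ?_)
  rw [Nat.cast_zero, rpow_zero]
  ring

/-- The integral `∫₀^C g(θ) (cos θ - cos C)^m dθ`; up to a power of `sin ψ`, each `𝓕_N^m(ψ)` is such
an integral with `C = C(ψ)` and the weight `g(θ) = cos (N θ)`. -/
noncomputable def capIntegral (g : ℝ → ℝ) (m : ℕ) (C : ℝ) : ℝ :=
  ∫ θ in (0 : ℝ)..C, g θ * (cos θ - cos C) ^ m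

/-- The integral `∫₀¹ t^k ((1 - t²)/2)^m dt`, which is the rescaled limit of `capIntegral g m` for
a weight `g(θ) ~ θ^k`. -/
noncomputable def capMoment (k m : ℕ) : ℝ :=
  ∫ t in (0 : ℝ)..1, t ^ k * ((1 - t ^ 2) / 2) ^ m

theorem capMoment_zero_zero : capMoment 0 0 = 1 := by
  simp [capMoment]

/- The integrand of `capMoment 0 m - (2m+3) capMoment 2 m` is the derivative of
`2 t ((1 - t²)/2)^(m+1)`, which vanishes at both endpoints. -/
theorem capMoment_two (m : ℕ) : capMoment 2 m = capMoment 0 m / (2 * m + 3) := by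
  have hderiv (t : ℝ) : HasDerivAt (fun t : ℝ => 2 * t * ((1 - t ^ 2) / 2) ^ (m + 1))
      (t ^ 0 * ((1 - t ^ 2) / 2) ^ m - (2 * m + 3) * (t ^ 2 * ((1 - t ^ 2) / 2) ^ m)) t := by
    have h := ((hasDerivAt_id t).const_mul 2).mul
      ((((hasDerivAt_pow 2 t).const_sub 1).div_const 2).pow (m + 1))
    refine h.congr_deriv ?_
    simp only [Pi.pow_apply, id_eq, Nat.add_sub_cancel]
    push_cast
    ring
  have hftc := intervalIntegral.integral_eq_sub_of_hasDerivAt (a := 0) (b := 1)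
    (fun t _ => hderiv t) (Continuous.intervalIntegrable (by fun_prop) _ _)
  rw [intervalIntegral.integral_sub (Continuous.intervalIntegrable (by fun_prop) _ _)
    (Continuous.intervalIntegrable (by fun_prop) _ _), intervalIntegral.integral_const_mul] at hftc
  have : capMoment 0 m - (2 * m + 3) * capMoment 2 m = 0 := by simpa [capMoment] using hftc
  rw [eq_div_iff (by positivity)]
  linarith

theorem capMoment_zero_succ (m : ℕ) :
    capMoment 0 (m + 1) = (m + 1) / (2 * m + 3) * capMoment 0 m := by
  have hsplit : capMoment 0 (m + 1) = (capMoment 0 m - capMoment 2 m) / 2 := by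
    rw [capMoment, capMoment, capMoment, ← intervalIntegral.integral_sub,
      ← intervalIntegral.integral_div]
    · congr 1 with t
      ring
    all_goals exact Continuous.intervalIntegrable (by fun_prop) _ _
  rw [hsplit, capMoment_two]
  field_simp
  ring

theorem capMoment_zero_pos (m : ℕ) : 0 < capMoment 0 m := by
  induction m with
  | zero => simp [capMoment_zero_zero]
  | succ m ih => rw [capMoment_zero_succ]; positivity

theorem capMoment_zero_one : capMoment 0 1 = 1 / 3 := by
  rw [capMoment_zero_succ, capMoment_zero_zero]
  norm_num

theorem capMoment_zero_two : capMoment 0 2 = 2 / 15 := by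
  rw [capMoment_zero_succ, capMoment_zero_one]
  norm_num

theorem capIntegral_add {g h : ℝ → ℝ} (hg : Continuous g) (hh : Continuous h) (m : ℕ) (C : ℝ) :
    capIntegral (fun θ => g θ + h θ) m C = capIntegral g m C + capIntegral h m C := by
  rw [capIntegral, capIntegral, capIntegral, ← intervalIntegral.integral_add]
  · simp only [add_mul]
  all_goals exact Continuous.intervalIntegrable (by fun_prop) _ _

theorem capIntegral_sub {g h : ℝ → ℝ} (hg : Continuous g) (hh : Continuous h) (m : ℕ) (C : ℝ) :
    capIntegral (fun θ => g θ - h θ) m C = capIntegral g m C - capIntegral h m C := by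
  rw [capIntegral, capIntegral, capIntegral, ← intervalIntegral.integral_sub]
  · simp only [sub_mul]
  all_goals exact Continuous.intervalIntegrable (by fun_prop) _ _

theorem capIntegral_eq_mul_integral_scaling (g : ℝ → ℝ) (m : ℕ) (C : ℝ) :
    capIntegral g m C = C * ∫ t in (0 : ℝ)..1, g (C * t) * (cos (C * t) - cos C) ^ m := by
  rw [intervalIntegral.mul_integral_comp_mul_left (f := fun θ => g θ * (cos θ - cos C) ^ m),
    mul_zero, mul_one, capIntegral]

/-- The filter of pairs `(C, t)` with `C → 0⁺`, uniformly in `t ∈ (0, 1]`: it expresses estimates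
on an integrand after the substitution `θ = C t`. -/
def scalingFilter : Filter (ℝ × ℝ) :=
  𝓝[>] 0 ×ˢ 𝓟 (Ioc 0 1)

theorem isBigO_scaling_pow (n : ℕ) :
    (fun p : ℝ × ℝ => (p.1 * p.2) ^ n) =O[scalingFilter] fun p => p.1 ^ n := by
  refine IsBigO.pow (.of_bound' ?_) n
  refine Eventually.mono (prod_mem_prod univ_mem (mem_principal_self _)) fun p hp => ?_
  rw [norm_mul, norm_of_nonneg hp.2.1.le]
  exact mul_le_of_le_one_right (norm_nonneg _) hp.2.2

theorem tendsto_fst_scaling : Tendsto Prod.fst scalingFilter (𝓝[>] 0) :=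
  tendsto_fst

theorem tendsto_scaling :
    Tendsto (fun p : ℝ × ℝ => p.1 * p.2) scalingFilter (𝓝[>] 0) := by
  refine tendsto_nhdsWithin_iff.2 ⟨?_, ?_⟩
  · have hfst : Tendsto (fun p : ℝ × ℝ => p.1 ^ 1) scalingFilter (𝓝 0) := by
      simpa using tendsto_fst_scaling.mono_right nhdsWithin_le_nhds
    simpa using (isBigO_scaling_pow 1).trans_tendsto hfst
  · refine Eventually.mono (prod_mem_prod self_mem_nhdsWithin (mem_principal_self _)) fun p hp => ?_
    exact mul_pos hp.1 hp.2.1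

theorem HasLeadingTerm.isBigO_scaling {g : ℝ → ℝ} {a : ℝ} {k : ℕ} (hg : HasLeadingTerm g a k) :
    (fun p : ℝ × ℝ => g (p.1 * p.2) - a * (p.1 * p.2) ^ k)
      =O[scalingFilter] fun p => p.1 ^ (k + 2) :=
  ((natCast_iff.1 hg).comp_tendsto tendsto_scaling).trans (isBigO_scaling_pow (k + 2))

theorem hasLeadingTerm_one_sub_cos_self :
    HasLeadingTerm (fun x => 1 - cos x) (1 / 2) (2 : ℕ) := by
  simpa using hasLeadingTerm_one_sub_cos 1

theorem isBigO_cos_scaling_sub_cos :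
    (fun p : ℝ × ℝ => cos (p.1 * p.2) - cos p.1)
      =O[scalingFilter] fun p => p.1 ^ 2 := by
  have hcos : (fun x => 1 - cos x) =O[𝓝[>] 0] fun x => x ^ 2 := by
    simpa using hasLeadingTerm_one_sub_cos_self.isBigO_rpow
  have h := (hcos.comp_tendsto tendsto_fst_scaling).sub
    ((hcos.comp_tendsto tendsto_scaling).trans (isBigO_scaling_pow 2))
  exact h.congr_left fun p => sub_sub_sub_cancel_left _ _ _

theorem isBigO_cos_scaling_sub_cos_sub :
    (fun p : ℝ × ℝ => cos (p.1 * p.2) - cos p.1 - p.1 ^ 2 * ((1 - p.2 ^ 2) / 2))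
      =O[scalingFilter] fun p => p.1 ^ 4 := by
  have hcos := hasLeadingTerm_one_sub_cos_self
  have h := ((HasLeadingTerm.natCast_iff.1 hcos).comp_tendsto tendsto_fst_scaling).sub
    hcos.isBigO_scaling
  refine h.congr_left fun p => ?_
  simp only [Function.comp_apply]
  ring

theorem isBigO_sq_mul_one_sub_sq :
    (fun p : ℝ × ℝ => p.1 ^ 2 * ((1 - p.2 ^ 2) / 2))
      =O[scalingFilter] fun p => p.1 ^ 2 := by
  have h := ((isBigO_refl (fun p : ℝ × ℝ => p.1 ^ 2) _).sub
    (isBigO_scaling_pow 2)).const_mul_left (1 / 2)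
  exact h.congr_left fun p => by ring

/- The step writes `F w - P w₀ = (F - P) w + P (w - w₀)` with `w = cos (C t) - cos C` and
`w₀ = C² (1 - t²)/2`. -/
theorem HasLeadingTerm.isBigO_scaling_mul_pow {g : ℝ → ℝ} {a : ℝ} {k : ℕ}
    (hg : HasLeadingTerm g a k) (m : ℕ) :
    (fun p : ℝ × ℝ => g (p.1 * p.2) * (cos (p.1 * p.2) - cos p.1) ^ m
        - a * p.1 ^ (k + 2 * m) * (p.2 ^ k * ((1 - p.2 ^ 2) / 2) ^ m))
      =O[scalingFilter] fun p => p.1 ^ (k + 2 * m + 2) := by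
  have hmain (m : ℕ) :
      (fun p : ℝ × ℝ => a * p.1 ^ (k + 2 * m) * (p.2 ^ k * ((1 - p.2 ^ 2) / 2) ^ m))
        =O[scalingFilter] fun p => p.1 ^ (k + 2 * m) := by
    have h := ((isBigO_scaling_pow k).mul (isBigO_sq_mul_one_sub_sq.pow m)).const_mul_left a
    refine h.congr (fun p => ?_) fun p => by ring
    rw [mul_pow, mul_pow, pow_add, pow_mul]
    ring
  induction m with
  | zero => exact hg.isBigO_scaling.congr_left fun p => by ring
  | succ m ih =>
    have hbase := ((hmain m).mul isBigO_cos_scaling_sub_cos_sub).congr_right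
      fun p => show _ = p.1 ^ (k + 2 * m + 2) * p.1 ^ 2 by ring
    exact ((ih.mul isBigO_cos_scaling_sub_cos).add hbase).congr (fun p => by ring)
      fun p => by ring

theorem HasLeadingTerm.capIntegral {g : ℝ → ℝ} {a : ℝ} {k : ℕ} (hg : HasLeadingTerm g a k)
    (hcont : Continuous g) (m : ℕ) :
    HasLeadingTerm (capIntegral g m) (a * capMoment k m) (k + 2 * m + 1 : ℕ) := by
  have hunif := hg.isBigO_scaling_mul_pow m
  rw [scalingFilter, ← uIoc_of_le zero_le_one] at hunif
  have hint := isBigO_intervalIntegral (e := fun C : ℝ => C ^ (k + 2 * m + 2))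
    (F := fun C t => g (C * t) * (cos (C * t) - cos C) ^ m
      - a * C ^ (k + 2 * m) * (t ^ k * ((1 - t ^ 2) / 2) ^ m)) hunif
  refine natCast_iff.2 (((isBigO_refl (fun C : ℝ => C) _).mul hint).congr (fun C => ?_)
    fun C => by ring)
  rw [intervalIntegral.integral_sub (Continuous.intervalIntegrable (by fun_prop) _ _)
    (Continuous.intervalIntegrable (by fun_prop) _ _), intervalIntegral.integral_const_mul,
    capIntegral_eq_mul_integral_scaling, capMoment]
  ring

theorem hasLeadingTerm_capIntegral_one (m : ℕ) :
    HasLeadingTerm (capIntegral (fun _ => 1) m) (capMoment 0 m) (2 * m + 1 : ℕ) := by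
  simpa using hasLeadingTerm_one.capIntegral continuous_const m

theorem hasLeadingTerm_capIntegral_one_sub_cos (c : ℝ) (m : ℕ) :
    HasLeadingTerm (capIntegral (fun θ => 1 - cos (c * θ)) m)
      (c ^ 2 / 2 * (capMoment 0 m / (2 * m + 3))) (2 * m + 3 : ℕ) := by
  have h := (hasLeadingTerm_one_sub_cos c).capIntegral (by fun_prop) m
  rwa [capMoment_two, show 2 + 2 * m + 1 = 2 * m + 3 by ring] at h

theorem hasLeadingTerm_capIntegral_one_add_cos (c : ℝ) (m : ℕ) :
    HasLeadingTerm (capIntegral (fun θ => 1 + cos (c * θ)) m) (2 * capMoment 0 m)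
      (2 * m + 1 : ℕ) := by
  simpa using (hasLeadingTerm_one_add_cos c).capIntegral (by fun_prop) m

theorem abs_cos_lt_sin {ψ : ℝ} (hψ : ψ ∈ Ioo (π / 4) (3 * π / 4)) : |cos ψ| < sin ψ := by
  have hsin : 0 < sin ψ :=
    sin_pos_of_pos_of_lt_pi (by linarith [hψ.1, pi_pos]) (by linarith [hψ.2, pi_pos])
  have hcos2 : cos (2 * ψ) < 0 :=
    cos_neg_of_pi_div_two_lt_of_lt (by linarith [hψ.1]) (by linarith [hψ.2])
  refine abs_lt_of_sq_lt_sq ?_ hsin.le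
  rw [cos_two_mul'] at hcos2
  linarith

theorem sin_pos_of_mem_Ioo {ψ : ℝ} (hψ : ψ ∈ Ioo (π / 4) (3 * π / 4)) : 0 < sin ψ :=
  (abs_nonneg _).trans_lt (abs_cos_lt_sin hψ)

theorem neg_cot_mem_Ioo {ψ : ℝ} (hψ : ψ ∈ Ioo (π / 4) (3 * π / 4)) :
    -(cos ψ / sin ψ) ∈ Ioo (-1) 1 := by
  have habs := abs_cos_lt_sin hψ
  have hsin := sin_pos_of_mem_Ioo hψ
  rw [mem_Ioo, ← abs_lt, abs_neg, abs_div, abs_of_pos hsin, div_lt_one hsin]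
  exact habs

theorem Cpsi_of_pi_div_four_lt {ψ : ℝ} (hψ : π / 4 < ψ) :
    Cpsi ψ = arccos (-(cos ψ / sin ψ)) :=
  if_neg hψ.not_ge

theorem Cpsi_pos {ψ : ℝ} (hψ : ψ ∈ Ioo (π / 4) (3 * π / 4)) : 0 < Cpsi ψ := by
  rw [Cpsi_of_pi_div_four_lt hψ.1]
  exact arccos_pos.2 (neg_cot_mem_Ioo hψ).2

theorem sin_mul_cos_Cpsi {ψ : ℝ} (hψ : ψ ∈ Ioo (π / 4) (3 * π / 4)) :
    sin ψ * cos (Cpsi ψ) = -cos ψ := by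
  have hcot := neg_cot_mem_Ioo hψ
  have hsin := sin_pos_of_mem_Ioo hψ
  rw [Cpsi_of_pi_div_four_lt hψ.1, cos_arccos hcot.1.le hcot.2.le]
  field_simp

theorem Ioo_mem_nhdsLT_collimation : Ioo (π / 4) (3 * π / 4) ∈ 𝓝[<] (3 * π / 4) :=
  Ioo_mem_nhdsLT (by linarith [pi_pos])

theorem tendsto_Cpsi : Tendsto Cpsi (𝓝[<] (3 * π / 4)) (𝓝[>] 0) := by
  refine tendsto_nhdsWithin_iff.2 ⟨?_, ?_⟩
  · have hangle : 3 * π / 4 = π - π / 4 := by ring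
    have hsin : sin (3 * π / 4) = √2 / 2 := by rw [hangle, sin_pi_sub, sin_pi_div_four]
    have hcos : cos (3 * π / 4) = -(√2 / 2) := by rw [hangle, cos_pi_sub, cos_pi_div_four]
    have hne : sin (3 * π / 4) ≠ 0 := by rw [hsin]; positivity
    have hval : arccos (-(cos (3 * π / 4) / sin (3 * π / 4))) = 0 := by
      rw [hcos, neg_div, neg_neg, ← hsin, div_self hne, arccos_one]
    have hcont : ContinuousAt (fun ψ => arccos (-(cos ψ / sin ψ))) (3 * π / 4) :=
      continuous_arccos.continuousAt.comp
        (continuous_cos.continuousAt.div continuous_sin.continuousAt hne).neg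
    refine (hval ▸ hcont.tendsto.mono_left nhdsWithin_le_nhds).congr' ?_
    filter_upwards [Ioo_mem_nhdsLT_collimation] with ψ hψ
    exact (Cpsi_of_pi_div_four_lt hψ.1).symm
  · filter_upwards [Ioo_mem_nhdsLT_collimation] with ψ hψ
    exact Cpsi_pos hψ

theorem calF_natCast (N m : ℕ) {ψ : ℝ} (hψ : ψ ∈ Ioo (π / 4) (3 * π / 4)) :
    calF N m ψ
      = sin ψ ^ m / (π * m.factorial) * capIntegral (fun θ => cos (N * θ)) m (Cpsi ψ) := by
  have hbase (θ : ℝ) : cos ψ + sin ψ * cos θ = sin ψ * (cos θ - cos (Cpsi ψ)) := by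
    rw [mul_sub, sin_mul_cos_Cpsi hψ]
    ring
  simp only [calF, capIntegral, hbase, rpow_natCast, mul_pow, Gamma_nat_eq_factorial,
    mul_left_comm _ (sin ψ ^ m), intervalIntegral.integral_const_mul]
  ring

theorem calF_zero (m : ℕ) {ψ : ℝ} (hψ : ψ ∈ Ioo (π / 4) (3 * π / 4)) :
    calF 0 m ψ = sin ψ ^ m / (π * m.factorial) * capIntegral (fun _ => 1) m (Cpsi ψ) := by
  simpa using calF_natCast 0 m hψ

theorem calF_zero_sub (N m : ℕ) {ψ : ℝ} (hψ : ψ ∈ Ioo (π / 4) (3 * π / 4)) :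
    calF 0 m ψ - calF N m ψ = sin ψ ^ m / (π * m.factorial) *
      capIntegral (fun θ => 1 - cos (N * θ)) m (Cpsi ψ) := by
  rw [calF_zero m hψ, calF_natCast N m hψ, ← mul_sub,
    capIntegral_sub continuous_const (by fun_prop)]

theorem calF_zero_add (N m : ℕ) {ψ : ℝ} (hψ : ψ ∈ Ioo (π / 4) (3 * π / 4)) :
    calF 0 m ψ + calF N m ψ = sin ψ ^ m / (π * m.factorial) *
      capIntegral (fun θ => 1 + cos (N * θ)) m (Cpsi ψ) := by
  rw [calF_zero m hψ, calF_natCast N m hψ, ← mul_add,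
    capIntegral_add continuous_const (by fun_prop)]

theorem HasLeadingTerm.comp_Cpsi {f : ℝ → ℝ} {a r : ℝ} (hf : HasLeadingTerm f a r) :
    (fun ψ => f (Cpsi ψ) - a * Cpsi ψ ^ r) =O[𝓝[<] (3 * π / 4)] fun ψ => Cpsi ψ ^ (r + 2) :=
  IsBigO.comp_tendsto hf tendsto_Cpsi

theorem eventually_calF_zero_pos (m : ℕ) : ∀ᶠ ψ in 𝓝[<] (3 * π / 4), 0 < calF 0 m ψ := by
  have hpos := (hasLeadingTerm_capIntegral_one m).eventually_pos (capMoment_zero_pos m)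
  filter_upwards [Ioo_mem_nhdsLT_collimation, tendsto_Cpsi.eventually hpos] with ψ hψ hI
  have hsin := sin_pos_of_mem_Ioo hψ
  rw [calF_zero m hψ]
  positivity

theorem hasLeadingTerm_capIntegral_one_sub_cos_div (c : ℝ) (m : ℕ) :
    HasLeadingTerm
      (fun C => capIntegral (fun θ => 1 - cos (c * θ)) m C / capIntegral (fun _ => 1) m C)
      (c ^ 2 / (2 * (2 * m + 3))) (2 : ℕ) := by
  have hpos := capMoment_zero_pos m
  convert (hasLeadingTerm_capIntegral_one_sub_cos c m).div (hasLeadingTerm_capIntegral_one m)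
    hpos.ne' using 1
  · field_simp
  · push_cast
    ring

theorem isBigO_calF_div_calF_zero (N m : ℕ) :
    (fun ψ => calF N m ψ / calF 0 m ψ - (1 - N ^ 2 / (2 * (2 * m + 3)) * Cpsi ψ ^ 2))
      =O[𝓝[<] (3 * π / 4)] fun ψ => Cpsi ψ ^ 4 := by
  have hlead := HasLeadingTerm.natCast_iff.1 (hasLeadingTerm_capIntegral_one_sub_cos_div N m)
  refine (hlead.comp_tendsto tendsto_Cpsi).neg_left.congr' ?_ .rfl
  filter_upwards [Ioo_mem_nhdsLT_collimation, eventually_calF_zero_pos m] with ψ hψ hpos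
  have hsin := sin_pos_of_mem_Ioo hψ
  have hratio : capIntegral (fun θ => 1 - cos (N * θ)) m (Cpsi ψ) /
      capIntegral (fun _ => 1) m (Cpsi ψ) = 1 - calF N m ψ / calF 0 m ψ := by
    rw [one_sub_div hpos.ne', calF_zero_sub N m hψ, calF_zero m hψ,
      mul_div_mul_left _ _ (by positivity)]
  simp only [Function.comp_apply, hratio]
  ring

theorem isBigO_calF_zero_add_div (N m : ℕ) :
    (fun ψ => (calF 0 m ψ + calF N m ψ) / (2 * calF 0 m ψ)
        - (1 - N ^ 2 / (4 * (2 * m + 3)) * Cpsi ψ ^ 2))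
      =O[𝓝[<] (3 * π / 4)] fun ψ => Cpsi ψ ^ 4 := by
  refine ((isBigO_calF_div_calF_zero N m).const_mul_left (1 / 2)).congr' ?_ .rfl
  filter_upwards [eventually_calF_zero_pos m] with ψ hpos
  field_simp
  ring

theorem two_mul_sqrt_two_mul_calF_zero_two {ψ : ℝ} (hψ : ψ ∈ Ioo (π / 4) (3 * π / 4)) :
    2 * √(2 * calF 0 2 ψ) = sin ψ / π * √(4 * π * capIntegral (fun _ => 1) 2 (Cpsi ψ)) := by
  have hsin := sin_pos_of_mem_Ioo hψ
  have hcalF : calF 0 2 ψ = sin ψ ^ 2 / (π * 2) * capIntegral (fun _ => 1) 2 (Cpsi ψ) := by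
    simpa using calF_zero 2 hψ
  have hsquare : 2 ^ 2 * (2 * calF 0 2 ψ)
      = (sin ψ / π) ^ 2 * (4 * π * capIntegral (fun _ => 1) 2 (Cpsi ψ)) := by
    rw [hcalF]
    field_simp
    ring
  have hsqrt := congrArg Real.sqrt hsquare
  rwa [sqrt_mul (sq_nonneg _), sqrt_mul (sq_nonneg _), sqrt_sq zero_le_two,
    sqrt_sq (by positivity)] at hsqrt

theorem sin_div_pi_mul_div_sqrt_calF {ψ : ℝ} (hψ : ψ ∈ Ioo (π / 4) (3 * π / 4)) (x : ℝ) :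
    sin ψ / π * x / (2 * √(2 * calF 0 2 ψ))
      = x / √(4 * π * capIntegral (fun _ => 1) 2 (Cpsi ψ)) := by
  have hsin := sin_pos_of_mem_Ioo hψ
  rw [two_mul_sqrt_two_mul_calF_zero_two hψ, mul_div_mul_left _ _ (by positivity)]

theorem hasLeadingTerm_sqrt_capIntegral :
    HasLeadingTerm (fun C => √(4 * π * capIntegral (fun _ => 1) 2 C)) √(8 * π / 15) (5 / 2) := by
  have h := ((hasLeadingTerm_capIntegral_one 2).const_mul (4 * π)).sqrt
    (mul_pos (by positivity) (capMoment_zero_pos 2))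
  rw [capMoment_zero_two, show 4 * π * (2 / 15) = 8 * π / 15 by ring] at h
  convert h using 1
  norm_num

theorem hasLeadingTerm_capIntegral_one_add_cos_div_sqrt (c : ℝ) :
    HasLeadingTerm (fun C => capIntegral (fun θ => 1 + cos (c * θ)) 1 C /
      √(4 * π * capIntegral (fun _ => 1) 2 C)) (√5 / √(6 * π)) (1 / 2) := by
  convert (hasLeadingTerm_capIntegral_one_add_cos c 1).div hasLeadingTerm_sqrt_capIntegral
    (by positivity) using 1
  · rw [capMoment_zero_one, ← sq_eq_sq₀ (by positivity) (by positivity)]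
    simp only [div_pow, sq_sqrt (show 0 ≤ 6 * π by positivity),
      sq_sqrt (show 0 ≤ 8 * π / 15 by positivity), sq_sqrt (show (0 : ℝ) ≤ 5 by norm_num)]
    field_simp
    norm_num
  · norm_num

theorem hasLeadingTerm_capIntegral_one_sub_cos_div_sqrt (c : ℝ) :
    HasLeadingTerm (fun C => capIntegral (fun θ => 1 - cos (c * θ)) 1 C /
      √(4 * π * capIntegral (fun _ => 1) 2 C)) (c ^ 2 / (4 * √(30 * π))) (5 / 2) := by
  convert (hasLeadingTerm_capIntegral_one_sub_cos c 1).div hasLeadingTerm_sqrt_capIntegral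
    (by positivity) using 1
  · rw [capMoment_zero_one, ← sq_eq_sq₀ (by positivity) (by positivity)]
    simp only [div_pow, mul_pow, sq_sqrt (show 0 ≤ 30 * π by positivity),
      sq_sqrt (show 0 ≤ 8 * π / 15 by positivity)]
    field_simp
    ring
  · norm_num

theorem isBigO_calF_zero_add_div_sqrt (N : ℕ) :
    (fun ψ => (calF 0 1 ψ + calF N 1 ψ) / (2 * √(2 * calF 0 2 ψ))
        - √5 / √(6 * π) * Cpsi ψ ^ (1 / 2 : ℝ))
      =O[𝓝[<] (3 * π / 4)] fun ψ => Cpsi ψ ^ (5 / 2 : ℝ) := by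
  have h := (hasLeadingTerm_capIntegral_one_add_cos_div_sqrt N).comp_Cpsi
  rw [show (1 / 2 : ℝ) + 2 = 5 / 2 by norm_num] at h
  refine h.congr' ?_ .rfl
  filter_upwards [Ioo_mem_nhdsLT_collimation] with ψ hψ
  have hadd := calF_zero_add N 1 hψ
  simp only [Nat.cast_one, pow_one, Nat.factorial_one, mul_one] at hadd
  rw [hadd, sin_div_pi_mul_div_sqrt_calF hψ]

theorem isBigO_calF_zero_sub_div_sqrt (N : ℕ) :
    (fun ψ => (calF 0 1 ψ - calF N 1 ψ) / (2 * √(2 * calF 0 2 ψ))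
        - N ^ 2 / (4 * √(30 * π)) * Cpsi ψ ^ (5 / 2 : ℝ))
      =O[𝓝[<] (3 * π / 4)] fun ψ => Cpsi ψ ^ (9 / 2 : ℝ) := by
  have h := (hasLeadingTerm_capIntegral_one_sub_cos_div_sqrt N).comp_Cpsi
  rw [show (5 / 2 : ℝ) + 2 = 9 / 2 by norm_num] at h
  refine h.congr' ?_ .rfl
  filter_upwards [Ioo_mem_nhdsLT_collimation] with ψ hψ
  have hsub := calF_zero_sub N 1 hψ
  simp only [Nat.cast_one, pow_one, Nat.factorial_one, mul_one] at hsub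
  rw [hsub, sin_div_pi_mul_div_sqrt_calF hψ]

end

/-- As `ψ → (3π/4)⁻` (so that `C = C(ψ) = arccos(-cot ψ) → 0⁺`):
`𝓕₁²/𝓕₀² = 1 - C²/14 + O(C⁴)`, `(𝓕₀²+𝓕₂²)/(2𝓕₀²) = 1 - C²/7 + O(C⁴)`,
`(𝓕₀¹+𝓕₂¹)/(2√(2𝓕₀²)) = (√5/√(6π)) C^{1/2} + O(C^{5/2})`, and
`(𝓕₀¹-𝓕₂¹)/(2√(2𝓕₀²)) = (1/√(30π)) C^{5/2} + O(C^{9/2})`. -/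
theorem calF_ratio_expansion_collimation :
    Tendsto Cpsi (nhdsWithin (3 * Real.pi / 4) (Set.Iio (3 * Real.pi / 4)))
      (nhdsWithin 0 (Set.Ioi 0)) ∧
    ((fun ψ => calF 1 2 ψ / calF 0 2 ψ - (1 - Cpsi ψ ^ 2 / 14))
      =O[nhdsWithin (3 * Real.pi / 4) (Set.Iio (3 * Real.pi / 4))]
        fun ψ => Cpsi ψ ^ 4) ∧
    ((fun ψ => (calF 0 2 ψ + calF 2 2 ψ) / (2 * calF 0 2 ψ) - (1 - Cpsi ψ ^ 2 / 7))
      =O[nhdsWithin (3 * Real.pi / 4) (Set.Iio (3 * Real.pi / 4))]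
        fun ψ => Cpsi ψ ^ 4) ∧
    ((fun ψ => (calF 0 1 ψ + calF 2 1 ψ) / (2 * Real.sqrt (2 * calF 0 2 ψ))
        - Real.sqrt 5 / Real.sqrt (6 * Real.pi) * Cpsi ψ ^ ((1 : ℝ) / 2))
      =O[nhdsWithin (3 * Real.pi / 4) (Set.Iio (3 * Real.pi / 4))]
        fun ψ => Cpsi ψ ^ ((5 : ℝ) / 2)) ∧
    ((fun ψ => (calF 0 1 ψ - calF 2 1 ψ) / (2 * Real.sqrt (2 * calF 0 2 ψ))
        - 1 / Real.sqrt (30 * Real.pi) * Cpsi ψ ^ ((5 : ℝ) / 2))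
      =O[nhdsWithin (3 * Real.pi / 4) (Set.Iio (3 * Real.pi / 4))]
        fun ψ => Cpsi ψ ^ ((9 : ℝ) / 2)) := by
  refine ⟨tendsto_Cpsi, ?_, ?_, isBigO_calF_zero_add_div_sqrt 2, ?_⟩
  · exact (isBigO_calF_div_calF_zero 1 2).congr_left fun ψ => by push_cast; ring
  · exact (isBigO_calF_zero_add_div 2 2).congr_left fun ψ => by push_cast; ring
  · exact (isBigO_calF_zero_sub_div_sqrt 2).congr_left fun ψ => by push_cast; ring
end
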